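/- With C_φ defined by C_φ(φ_R(T)) = φ_R(C_{m+1|n}(T)) (applying φ_R coefficientwise), one has C_φ(T+R) = (E − T)·C_{m|n}(T+1), and consequently C_φ(E + R) = 0. -/

import Mathlib

set_option maxHeartbeats 1000000
set_option synthInstance.maxHeartbeats 400000

noncomputable section
open scoped TensorProduct

/-- The index set `I = {1,…,m,1̄,…,n̄}` of `gl(m|n)`; `Sum.inl` are the even
(unbarred) indices, `Sum.inr` the odd (barred) ones.  The index set
`Î = {0} ∪ I` of `gl(m+1|n)` is realized as `Ind (m+1) n`, with `0 = Sum.inl 0`. -/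
abbrev Ind (m n : ℕ) := Fin m ⊕ Fin n

/-- Parity of an index, as `0` or `1`. -/
def pI {m n : ℕ} : Ind m n → ℕ := Sum.elim (fun _ => 0) (fun _ => 1)

/-- The total order `1 < ⋯ < m < 1̄ < ⋯ < n̄` on `I` (and, with `m+1` in place of `m`,
the order `0 < 1 < ⋯ < m < 1̄ < ⋯ < n̄` on `Î`). -/
def iltI {m n : ℕ} : Ind m n → Ind m n → Prop
  | Sum.inl a, Sum.inl b => a < b
  | Sum.inl _, Sum.inr _ => True
  | Sum.inr _, Sum.inl _ => False
  | Sum.inr a, Sum.inr b => a < b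

/-- The distinguished index `0` of `Î`. -/
def z0 {m n : ℕ} : Ind (m+1) n := Sum.inl 0

/-- The inclusion `I ↪ Î`. -/
def emb {m n : ℕ} : Ind m n → Ind (m+1) n := Sum.map Fin.succ id

lemma emb_injective {m n : ℕ} : Function.Injective (emb (m := m) (n := n)) := by
  intro a b h
  cases a <;> cases b <;> simp [emb, Fin.succ_inj] at h <;> simp [h]

lemma emb_ne_z0 {m n : ℕ} (a : Ind m n) : emb a ≠ z0 := by
  cases a <;> simp [emb, z0, Fin.succ_ne_zero]

/-- Builds a linear map out of a space with basis `α` from a function on basis vectors. -/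
def mkOp {α M : Type} [AddCommGroup M] [Module ℂ M] (g : α → M) : (α →₀ ℂ) →ₗ[ℂ] M :=
  Finsupp.lsum ℂ fun x => LinearMap.toSpanSingleton ℂ M (g x)

/-- Number of odd variables occurring before position `i`. -/
def cntB {n : ℕ} (b : Fin n → Bool) (i : Fin n) : ℕ :=
  (Finset.univ.filter fun j => j < i ∧ b j = true).card

/-- Number of odd variables occurring. -/
def cntA {n : ℕ} (b : Fin n → Bool) : ℕ := (Finset.univ.filter fun j => b j = true).card


/-- The defining (super-)commutation relations of `gl`:
`e_ij e_kl − (−1)^{(|i|+|j|)(|k|+|l|)} e_kl e_ij = δ_jk e_il − (−1)^{(|i|+|j|)(|k|+|l|)} δ_li e_kj`. -/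
inductive glRel (ι : Type) (p : ι → ℕ) [DecidableEq ι] :
    FreeAlgebra ℂ (ι × ι) → FreeAlgebra ℂ (ι × ι) → Prop
  | basic (i j k l : ι) : glRel ι p
      (FreeAlgebra.ι ℂ (i, j) * FreeAlgebra.ι ℂ (k, l)
        - ((-1 : ℂ) ^ ((p i + p j) * (p k + p l))) •
            (FreeAlgebra.ι ℂ (k, l) * FreeAlgebra.ι ℂ (i, j)))
      ((if j = k then FreeAlgebra.ι ℂ (i, l) else 0)
        - ((-1 : ℂ) ^ ((p i + p j) * (p k + p l))) •
            (if l = i then FreeAlgebra.ι ℂ (k, j) else 0))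

/-- The universal enveloping superalgebra of the general linear Lie superalgebra with
index set `ι` and parity `p`, presented by generators `e_ij` and the super-commutator
relations. -/
abbrev UEA (ι : Type) (p : ι → ℕ) [DecidableEq ι] : Type := RingQuot (glRel ι p)

/-- The generator `e_ij` of `UEA ι p`. -/
def gen {ι : Type} (p : ι → ℕ) [DecidableEq ι] (i j : ι) : UEA ι p :=
  RingQuot.mkAlgHom ℂ (glRel ι p) (FreeAlgebra.ι ℂ (i, j))

/-- Monomials `t_0^{k} t^e t̄^b` of `F = ℂ[t_0^{±1},t_1,…,t_m] ⊗ Λ_n`. -/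
abbrev FMon (m n : ℕ) := ℤ × (Fin m → ℕ) × (Fin n → Bool)

/-- `F = ℂ[t_0^{±1},t_1,…,t_m] ⊗ Λ_n` as the vector space with basis the monomials. -/
abbrev FSp (m n : ℕ) : Type := FMon m n →₀ ℂ

/-- The basis monomial of `F` attached to `x`. -/
def fmono {m n : ℕ} (x : FMon m n) : FSp m n := Finsupp.single x 1

/-- Left multiplication by `t_i/t_0` for an even index `i ∈ {1,…,m}`. -/
def opDivE {m n : ℕ} (i : Fin m) : Module.End ℂ (FSp m n) :=
  mkOp fun x => fmono (x.1 - 1, Function.update x.2.1 i (x.2.1 i + 1), x.2.2)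

/-- Left multiplication by `t_ī/t_0` for an odd index `ī`. -/
def opDivO {m n : ℕ} (i : Fin n) : Module.End ℂ (FSp m n) :=
  mkOp fun x => if x.2.2 i then 0 else
    ((-1 : ℂ) ^ (cntB x.2.2 i)) • fmono (x.1 - 1, x.2.1, Function.update x.2.2 i true)

/-- The operator `t_0 ∂_0`. -/
def opPar0 {m n : ℕ} : Module.End ℂ (FSp m n) :=
  mkOp fun x => (x.1 : ℂ) • fmono x

/-- The operator `t_0 ∂_i` for an even index `i ∈ {1,…,m}`. -/
def opParE {m n : ℕ} (i : Fin m) : Module.End ℂ (FSp m n) :=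
  mkOp fun x => (x.2.1 i : ℂ) • fmono (x.1 + 1, Function.update x.2.1 i (x.2.1 i - 1), x.2.2)

/-- The operator `t_0 ∂_ī` for an odd index `ī`. -/
def opParO {m n : ℕ} (i : Fin n) : Module.End ℂ (FSp m n) :=
  mkOp fun x => if x.2.2 i then
    ((-1 : ℂ) ^ (cntB x.2.2 i)) • fmono (x.1 + 1, x.2.1, Function.update x.2.2 i false) else 0

/-- The multiplication operators `t_i/t_0`, `i ∈ I`. -/
def opDiv {m n : ℕ} : Ind m n → Module.End ℂ (FSp m n) := Sum.elim opDivE opDivO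

/-- The operators `t_0 ∂_i`, `i ∈ Î`. -/
def opPar {m n : ℕ} : Ind (m+1) n → Module.End ℂ (FSp m n) :=
  Sum.elim (Fin.cases opPar0 opParE) opParO

/-- The multiplication operators `t_i/t_0` for `i ∈ Î` (equal to `1` for `i = 0`). -/
def opDivB {m n : ℕ} : Ind (m+1) n → Module.End ℂ (FSp m n) :=
  Sum.elim (Fin.cases 1 opDivE) opDivO

/-- The generators of `D'(m|n)`. -/
def Dgens (m n : ℕ) : Set (Module.End ℂ (FSp m n)) := Set.range opDiv ∪ Set.range opPar

/-- The superalgebra `D'(m|n)` of differential operators on `F`, i.e. the subalgebra of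
operators on `F` generated by `t_i/t_0` (`i ∈ I`) and `t_0∂_i` (`i ∈ Î`). -/
def Dprime (m n : ℕ) : Subalgebra ℂ (Module.End ℂ (FSp m n)) := Algebra.adjoin ℂ (Dgens m n)

/-- `t_i/t_0` as an element of `D'(m|n)`. -/
def tdiv {m n : ℕ} (i : Ind m n) : Dprime m n :=
  ⟨opDiv i, Algebra.subset_adjoin (Or.inl ⟨i, rfl⟩)⟩

/-- `t_0∂_i` as an element of `D'(m|n)`. -/
def tpar {m n : ℕ} (i : Ind (m+1) n) : Dprime m n :=
  ⟨opPar i, Algebra.subset_adjoin (Or.inr ⟨i, rfl⟩)⟩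

/-- `t_i/t_0` for `i ∈ Î` as an element of `D'(m|n)`. -/
def tdivB {m n : ℕ} : Ind (m+1) n → Dprime m n :=
  Sum.elim (Fin.cases 1 fun i => tdiv (Sum.inl i)) fun i => tdiv (Sum.inr i)

/-- The operator `t_a∂_b = (t_a/t_0)(t_0∂_b)` of `D'(m|n)`, for `a, b ∈ Î`. -/
def tdel {m n : ℕ} (a b : Ind (m+1) n) : Dprime m n := tdivB a * tpar b

/-- The Euler operator `E = Σ_{i∈Î} t_i∂_i ∈ D'(m|n)`. -/
def En (m n : ℕ) : Dprime m n := ∑ i : Ind (m+1) n, tdel i i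

noncomputable instance instDprimeRing (m n : ℕ) : Ring (Dprime m n) :=
  @Subalgebra.toRing ℂ (Module.End ℂ (FSp m n)) inferInstance inferInstance inferInstance _

noncomputable instance instDprimeAlgebra (m n : ℕ) : Algebra ℂ (Dprime m n) :=
  @Subalgebra.algebra ℂ (Module.End ℂ (FSp m n)) inferInstance inferInstance inferInstance _

/-- The super tensor product `D'(m|n) ⊗ U(gl(m|n))`, axiomatized: an algebra `T` together
with algebra maps `d ↦ d⊗1`, `u ↦ 1⊗u`, such that the induced linear map
`D'(m|n) ⊗_ℂ U(gl(m|n)) → T` is a linear isomorphism and such that the Koszul sign rule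
`(1⊗u)(d⊗1) = (−1)^{|u||d|}(d⊗1)(1⊗u)` holds on (super-)generators. -/
structure SuperTensor (m n : ℕ) where
  T : Type
  [ringT : Ring T]
  [algT : Algebra ℂ T]
  inD : Dprime m n →ₐ[ℂ] T
  inU : UEA (Ind m n) pI →ₐ[ℂ] T
  equiv : ((Dprime m n) ⊗[ℂ] (UEA (Ind m n) pI)) ≃ₗ[ℂ] T
  equiv_tmul : ∀ (d : Dprime m n) (u : UEA (Ind m n) pI), equiv (d ⊗ₜ u) = inD d * inU u
  comm_div : ∀ (i j k : Ind m n),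
    inU (gen pI i j) * inD (tdiv k) =
      ((-1 : ℂ) ^ ((pI i + pI j) * pI k)) • (inD (tdiv k) * inU (gen pI i j))
  comm_par : ∀ (i j : Ind m n) (k : Ind (m+1) n),
    inU (gen pI i j) * inD (tpar k) =
      ((-1 : ℂ) ^ ((pI i + pI j) * pI k)) • (inD (tpar k) * inU (gen pI i j))

attribute [instance] SuperTensor.ringT SuperTensor.algT

/-- The predicate expressing that `φ : U(gl(m+1|n)) → D'(m|n) ⊗ U(gl(m|n))` is given on the
generators `e_ab` by the formulas of Theorem 3.1 (for the central element `R`). -/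
def IsPhi {m n : ℕ} (ST : SuperTensor m n) (R : ST.T)
    (φ : UEA (Ind (m+1) n) pI →ₐ[ℂ] ST.T) : Prop :=
  (∀ a b : Ind m n, φ (gen pI (emb a) (emb b)) =
      ST.inD (tdel (emb a) (emb b)) + ST.inU (gen pI a b)
        + (if a = b then ((-1 : ℂ) ^ (pI a * pI b)) • R else 0)) ∧
  (∀ a : Ind m n, φ (gen pI (emb a) z0) =
      ST.inD (tdel (emb a) z0)
        - ∑ j : Ind m n, ((-1 : ℂ) ^ (pI a * pI j)) • (ST.inD (tdiv j) * ST.inU (gen pI a j))) ∧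
  (∀ b : Ind m n, φ (gen pI z0 (emb b)) = ST.inD (tdel z0 (emb b))) ∧
  (φ (gen pI z0 z0) = ST.inD (tdel z0 z0) + R)

/-- The generating set of `U(sl(m+1|n))` inside `U(gl(m+1|n))`: the `e_ij` with `i ≠ j`
together with `e_00 − (−1)^{|a|} e_aa` for `a ∈ I`. -/
def slSet (m n : ℕ) : Set (UEA (Ind (m+1) n) pI) :=
  {x | (∃ i j : Ind (m+1) n, i ≠ j ∧ x = gen pI i j) ∨
    (∃ a : Ind m n, x = gen pI z0 z0 - ((-1 : ℂ) ^ (pI a)) • gen pI (emb a) (emb a))}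

/-- `U(sl(m+1|n))`, realized as the subalgebra of `U(gl(m+1|n))` generated by `sl(m+1|n)`. -/
def Usl (m n : ℕ) : Subalgebra ℂ (UEA (Ind (m+1) n) pI) := Algebra.adjoin ℂ (slSet m n)

lemma mem_gen_ne {m n : ℕ} {i j : Ind (m+1) n} (h : i ≠ j) : gen pI i j ∈ Usl m n :=
  Algebra.subset_adjoin (Or.inl ⟨i, j, h, rfl⟩)

lemma mem_h {m n : ℕ} (a : Ind m n) :
    gen pI z0 z0 - ((-1 : ℂ) ^ (pI a)) • gen pI (emb a) (emb a) ∈ Usl m n :=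
  Algebra.subset_adjoin (Or.inr ⟨a, rfl⟩)

/-- The predicate expressing that `ψ : U(sl(m+1|n)) → D'(m|n) ⊗ U(gl(m|n))` is given on the
generators by the formulas of Corollary 3.2 (the homomorphism `φ^s`). -/
def IsPhiS {m n : ℕ} (ST : SuperTensor m n) (ψ : Usl m n →ₐ[ℂ] ST.T) : Prop :=
  (∀ (a b : Ind m n) (h : a ≠ b),
    ψ ⟨gen pI (emb a) (emb b), mem_gen_ne fun he => h (emb_injective he)⟩ =
      ST.inD (tdel (emb a) (emb b)) + ST.inU (gen pI a b)) ∧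
  (∀ a : Ind m n, ψ ⟨gen pI (emb a) z0, mem_gen_ne (emb_ne_z0 a)⟩ =
      ST.inD (tdel (emb a) z0)
        - ∑ j : Ind m n, ((-1 : ℂ) ^ (pI a * pI j)) • (ST.inD (tdiv j) * ST.inU (gen pI a j))) ∧
  (∀ b : Ind m n, ψ ⟨gen pI z0 (emb b), mem_gen_ne (Ne.symm (emb_ne_z0 b))⟩ =
      ST.inD (tdel z0 (emb b))) ∧
  (∀ a : Ind m n, ψ ⟨gen pI z0 z0 - ((-1 : ℂ) ^ (pI a)) • gen pI (emb a) (emb a), mem_h a⟩ =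
      ST.inD (tdel (m:=m) (n:=n) z0 z0 - ((-1 : ℂ) ^ (pI a)) • tdel (emb a) (emb a))
        - ((-1 : ℂ) ^ (pI a)) • ST.inU (gen pI a a))

/-- The first Gelfand invariant `G₁ = Σ_i e_ii`. -/
def G1 (ι : Type) (p : ι → ℕ) [DecidableEq ι] [Fintype ι] : UEA ι p := ∑ i : ι, gen p i i

/-- The distinguished central element `R₁ = −(1/(m−n+1))(E⊗1 + 1⊗G₁)`. -/
def R1elt {m n : ℕ} (ST : SuperTensor m n) : ST.T :=
  -(1 / ((m : ℂ) - n + 1)) • (ST.inD (En m n) + ST.inU (G1 (Ind m n) pI))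

/-- The algebra of Laurent-type series in `T` with coefficients in `A`: Hahn series over `ℤ`,
where the exponent `k` records the power `T^{-k}` (so that supports of honest Laurent series
in `T^{-1}`, with finitely many positive powers of `T`, are well-ordered). -/
abbrev TSer (A : Type) [Ring A] := HahnSeries ℤ A

/-- The variable `T`. -/
def Tv {A : Type} [Ring A] : TSer A := HahnSeries.single (-1 : ℤ) (1 : A)

/-- The matrix `𝔈 = ((−1)^{|i|} e_{ij})_{i,j∈I}` with entries in `A`, as a matrix of constant
series. -/
def scrE (m n : ℕ) {A : Type} [Ring A] [Algebra ℂ A] (e : Ind m n → Ind m n → A) :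
    Matrix (Ind m n) (Ind m n) (TSer A) :=
  fun i j => HahnSeries.C (((-1 : ℂ) ^ (pI i)) • e i j)

/-- The Capelli Berezinian
`C_{m|n}(v) = Det[(𝔈−v−i+1)_{ij}]_{i,j≤m} ⬝ Det[((𝔈−v−m+i)^{−1})^{st}_{ij}]_{m<i,j≤m+n}`
of the matrix `E`, evaluated at the series `v`.  Here `Det` denotes the column determinant
`Σ_σ sgn(σ) X_{σ(1),1}⋯X_{σ(N),N}`, matrix inverses are taken in the matrix ring over the
Laurent series algebra (via `Ring.inverse`), and the supertransposition signs
`(−1)^{|i|(|j|+1)}` are equal to `1` on the odd-odd block. -/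
def capelli {m n : ℕ} {A : Type} [Ring A] [Algebra ℂ A]
    (E : Matrix (Ind m n) (Ind m n) (TSer A)) (v : TSer A) : TSer A :=
  (∑ σ : Equiv.Perm (Fin m), ((Equiv.Perm.sign σ : ℤˣ) : ℤ) •
      (List.ofFn fun t : Fin m =>
        E (Sum.inl (σ t)) (Sum.inl t)
          - (if σ t = t then v + (((t : ℕ) : ℂ) • 1) else 0)).prod)
  * (∑ τ : Equiv.Perm (Fin n), ((Equiv.Perm.sign τ : ℤˣ) : ℤ) •
      (List.ofFn fun t : Fin n =>
        (Ring.inverse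
          (E - (v + ((((m : ℂ) - ((t : ℕ) : ℂ)) - 1) • 1)) •
            (1 : Matrix (Ind m n) (Ind m n) (TSer A))))
          (Sum.inr t) (Sum.inr (τ t))).prod)

/-!
The scalar `R` only shifts `T`.  Apart from it, the image of the matrix `𝔈` of `gl(m+1|n)` is the
block matrix `[[κ − d y, d], [y (κ − d y) − F y, y d + F]]`, where `y` is the column of signed
coordinates `t_a/t_0`, `d` the row of derivations `t_0 ∂_b`, `F` the matrix `𝔈` of `gl(m|n)` and
`κ = E + m − n`.  Conjugation by the unipotent `[[1, 0], [y, 1]]` makes it block upper triangular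
with diagonal blocks `κ` and `F`, so that its resolvent is a rank-one perturbation
`(F − u)⁻¹ − y (κ − u)⁻¹ d (F − u)⁻¹` of that of `F`.

The entries do not commute, so column determinants are written as Berezin integrals of products of
linear forms in Grassmann variables, for which the relations of `gl` become exchange relations
`ψ_i(x) ψ_j(x + 1) = −ψ_j(x) ψ_i(x + 1)`. Let `δ` be the Capelli determinant of the even block of
`F`, shifted by one. Cofactor expansion writes that of the image as `δ (κ − v − m) − Σ_b γ_b y_b`,
where `b` runs over the odd indices and the `γ_b` are mixed minors. Multiplication by the perturbed
odd rows, one at a time, removes the terms `γ_b y_b` and shifts the other factor by one, and so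
telescopes to `δ (κ − v − m + n) = δ (E − v)`.
-/

open scoped Matrix

/-! ### Ordered determinants and Berezin integration -/

lemma eq_zero_of_eq_neg {B : Type*} [Ring B] [Invertible (2 : B)] {x : B} (h : x = -x) : x = 0 :=
  (isUnit_of_invertible (2 : B)).mul_right_eq_zero.mp <| by
    rw [two_mul, add_eq_zero_iff_eq_neg, ← h]

section OrderedDet

variable {B : Type*} [Ring B] {k : ℕ}

/-- The row-ordered determinant `Σ_σ sgn(σ) A_{1,σ(1)} ⋯ A_{k,σ(k)}` of a matrix over a
noncommutative ring.  The column determinant of the paper is `orderedDet Aᵀ`. -/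
def orderedDet (A : Matrix (Fin k) (Fin k) B) : B :=
  ∑ σ : Equiv.Perm (Fin k), ((Equiv.Perm.sign σ : ℤˣ) : ℤ) • (List.ofFn fun t ↦ A t (σ t)).prod

lemma orderedDet_eq_zero_of_row_eq_zero {A : Matrix (Fin k) (Fin k) B} (t : Fin k)
    (ht : ∀ j, A t j = 0) : orderedDet A = 0 := by
  refine Finset.sum_eq_zero fun σ _ ↦ ?_
  rw [List.prod_eq_zero ((List.mem_ofFn' _ _).mpr ⟨t, ht (σ t)⟩), smul_zero]

lemma orderedDet_eq_orderedDet_submatrix_succ {A : Matrix (Fin (k + 1)) (Fin (k + 1)) B}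
    (h0 : A 0 0 = 1) (hcol : ∀ t : Fin k, A t.succ 0 = 0) :
    orderedDet A = orderedDet (A.submatrix Fin.succ Fin.succ) := by
  simp only [orderedDet]
  rw [← (Equiv.Perm.decomposeFin (n := k)).symm.sum_comp, Fintype.sum_prod_type, Fin.sum_univ_succ]
  have hvanish : ∀ i : Fin k, ∀ σ : Equiv.Perm (Fin k),
      (List.ofFn fun t ↦ A t (Equiv.Perm.decomposeFin.symm (i.succ, σ) t)).prod = 0 := fun i σ ↦ by
    set τ := Equiv.Perm.decomposeFin.symm (i.succ, σ)
    have hτ : τ.symm 0 ≠ 0 := fun h ↦ by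
      have : τ 0 = 0 := by rw [← h, Equiv.apply_symm_apply, h]
      simp [τ] at this
    refine List.prod_eq_zero ((List.mem_ofFn' _ _).mpr ⟨τ.symm 0, ?_⟩)
    beta_reduce
    rw [Equiv.apply_symm_apply, ← Fin.succ_pred _ hτ, hcol]
  simp only [hvanish, smul_zero, Finset.sum_const_zero, add_zero]
  simp [List.ofFn_succ, h0]

end OrderedDet

/-- The Grassmann algebra over `B` on `k` odd variables commuting with `B`; ordered determinants
over `B` are Berezin integrals of products in it. -/
def GrassmannExt (B : Type*) [Ring B] (k : ℕ) : Type _ := B ⊗[ℤ] ExteriorAlgebra ℤ (Fin k → ℤ)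

namespace GrassmannExt

variable {B : Type*} [Ring B] {k : ℕ}

instance : Ring (GrassmannExt B k) :=
  inferInstanceAs (Ring (B ⊗[ℤ] ExteriorAlgebra ℤ (Fin k → ℤ)))

/-- The element `b ⊗ x`. -/
def tmul (b : B) (x : ExteriorAlgebra ℤ (Fin k → ℤ)) : GrassmannExt B k := b ⊗ₜ[ℤ] x

lemma tmul_mul_tmul (b c : B) (x y : ExteriorAlgebra ℤ (Fin k → ℤ)) :
    tmul b x * tmul c y = tmul (b * c) (x * y) :=
  Algebra.TensorProduct.tmul_mul_tmul ..

@[elab_as_elim]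
lemma induction {p : GrassmannExt B k → Prop} (tmul : ∀ b x, p (tmul b x))
    (add : ∀ z w, p z → p w → p (z + w)) (z : GrassmannExt B k) : p z :=
  have tmul_zero : GrassmannExt.tmul 0 0 = (0 : GrassmannExt B k) := TensorProduct.zero_tmul B _
  TensorProduct.induction_on z (tmul_zero ▸ tmul 0 0) tmul add

/-- The inclusion of the coefficients. -/
def const : B →+* GrassmannExt B k :=
  (Algebra.TensorProduct.includeLeft (R := ℤ) (S := ℤ) (A := B)
    (B := ExteriorAlgebra ℤ (Fin k → ℤ))).toRingHom

/-- The generating odd variables `χ_i`. -/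
def oddVar (i : Fin k) : GrassmannExt B k := tmul 1 (ExteriorAlgebra.ι ℤ (Pi.single i 1))

/-- The linear form `Σ_i c_i χ_i`. -/
def lin (c : Fin k → B) : GrassmannExt B k := ∑ i, const (c i) * oddVar i

/-- The coefficient of `χ_1 ⋯ χ_k` on the exterior algebra. -/
def topCoeff (k : ℕ) : ExteriorAlgebra ℤ (Fin k → ℤ) →ₗ[ℤ] ℤ :=
  ExteriorAlgebra.liftAlternating fun i ↦
    if h : i = k then h ▸ (Matrix.detRowAlternating (R := ℤ) (n := Fin k)) else 0

/-- The Berezin integral, that is the coefficient of `χ_1 ⋯ χ_k`. -/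
def berezin : GrassmannExt B k →+ B :=
  ((TensorProduct.rid ℤ B).toLinearMap ∘ₗ LinearMap.lTensor B (topCoeff k)).toAddMonoidHom

lemma topCoeff_prod_ι (v : Fin k → Fin k → ℤ) :
    topCoeff k (List.ofFn fun t ↦ ExteriorAlgebra.ι ℤ (v t)).prod = (Matrix.of v).det := by
  rw [← ExteriorAlgebra.ιMulti_apply, topCoeff, ExteriorAlgebra.liftAlternating_apply_ιMulti]
  simp only [↓reduceDIte]
  rfl

lemma berezin_tmul (b : B) (x : ExteriorAlgebra ℤ (Fin k → ℤ)) :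
    berezin (tmul b x) = topCoeff k x • b :=
  rfl

lemma const_mul_tmul (b c : B) (x : ExteriorAlgebra ℤ (Fin k → ℤ)) :
    const b * tmul c x = tmul (b * c) x :=
  (tmul_mul_tmul b c 1 x).trans (by rw [one_mul])

lemma tmul_mul_const (b c : B) (x : ExteriorAlgebra ℤ (Fin k → ℤ)) :
    tmul c x * const b = tmul (c * b) x :=
  (tmul_mul_tmul c b x 1).trans (by rw [mul_one])

lemma commute_oddVar_const (i : Fin k) (b : B) : Commute (oddVar i) (const b) := by
  rw [Commute, SemiconjBy, oddVar, const_mul_tmul, tmul_mul_const, mul_one, one_mul]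

lemma oddVar_mul_swap (i j : Fin k) :
    (oddVar i * oddVar j : GrassmannExt B k) = -(oddVar j * oddVar i) := by
  rw [oddVar, oddVar, tmul_mul_tmul, tmul_mul_tmul,
    eq_neg_of_add_eq_zero_left (ExteriorAlgebra.ι_add_mul_swap _ _)]
  exact TensorProduct.tmul_neg _ _

lemma berezin_const_mul (b : B) (z : GrassmannExt B k) :
    berezin (const b * z) = b * berezin z := by
  induction z using induction with
  | tmul c x => rw [const_mul_tmul, berezin_tmul, berezin_tmul, mul_smul_comm]
  | add z w hz hw => rw [mul_add, map_add, hz, hw, map_add, mul_add]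

lemma berezin_mul_const (b : B) (z : GrassmannExt B k) :
    berezin (z * const b) = berezin z * b := by
  induction z using induction with
  | tmul c x => rw [tmul_mul_const, berezin_tmul, berezin_tmul, smul_mul_assoc]
  | add z w hz hw => rw [add_mul, map_add, hz, hw, map_add, add_mul]

lemma commute_const {b : B} (hb : ∀ c, Commute b c) (z : GrassmannExt B k) :
    Commute (const b) z := by
  induction z using induction with
  | tmul c x => rw [Commute, SemiconjBy, const_mul_tmul, tmul_mul_const, (hb c).eq]
  | add z w hz hw => exact hz.add_right hw

instance [Invertible (2 : B)] : Invertible (2 : GrassmannExt B k) :=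
  (Invertible.map const (2 : B)).copy 2 (map_ofNat const 2).symm

lemma prod_const_mul_oddVar : ∀ {l : ℕ} (c : Fin l → B) (f : Fin l → Fin k),
    (List.ofFn fun t ↦ (const (c t) * oddVar (f t) : GrassmannExt B k)).prod =
      tmul (List.ofFn c).prod (List.ofFn fun t ↦ ExteriorAlgebra.ι ℤ (Pi.single (f t) 1)).prod
  | 0, _, _ => by simp only [List.ofFn_zero, List.prod_nil]; rfl
  | l + 1, c, f => by
    simp only [List.ofFn_succ, List.prod_cons]
    rw [prod_const_mul_oddVar, oddVar, const_mul_tmul, mul_one, tmul_mul_tmul]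

lemma det_pi_single (f : Fin k → Fin k) :
    (Matrix.of fun t ↦ (Pi.single (f t) 1 : Fin k → ℤ)).det =
      ∑ σ : Equiv.Perm (Fin k), if f = σ then ((Equiv.Perm.sign σ : ℤˣ) : ℤ) else 0 := by
  rw [← Matrix.det_transpose, Matrix.det_apply']
  refine Finset.sum_congr rfl fun σ _ ↦ ?_
  split_ifs with h
  · simp [h]
  · obtain ⟨i, hi⟩ := Function.ne_iff.mp h
    rw [Finset.prod_eq_zero (Finset.mem_univ i), mul_zero]
    simp [Ne.symm hi]

lemma berezin_prod_lin (A : Matrix (Fin k) (Fin k) B) :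
    berezin (List.ofFn fun t ↦ lin (A t)).prod = orderedDet A := by
  have hexpand := (MultilinearMap.mkPiAlgebraFin ℤ k (GrassmannExt B k)).map_sum
    (g := fun t i ↦ const (A t i) * oddVar i)
  simp only [MultilinearMap.mkPiAlgebraFin_apply] at hexpand
  simp only [lin, hexpand, map_sum, prod_const_mul_oddVar, berezin_tmul, topCoeff_prod_ι,
    det_pi_single, Finset.sum_smul, orderedDet]
  rw [Finset.sum_comm]
  refine Finset.sum_congr rfl fun σ _ ↦ ?_
  simp [ite_smul]

lemma lin_mul_lin (a b : Fin k → B) :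
    lin a * lin b = ∑ i, ∑ j, const (a i * b j) * (oddVar i * oddVar j) := by
  simp only [lin, Finset.sum_mul_sum, map_mul]
  refine Finset.sum_congr rfl fun i _ ↦ Finset.sum_congr rfl fun j _ ↦ ?_
  rw [mul_assoc, ← mul_assoc (oddVar i), (commute_oddVar_const i (b j)).eq]
  simp only [mul_assoc]

lemma lin_mul_lin_eq_neg [Invertible (2 : B)] {a a' b b' : Fin k → B}
    (h : ∀ i j, a i * b' j - b j * a' i = a j * b' i - b i * a' j) :
    (lin a * lin b' : GrassmannExt B k) = -(lin b * lin a') := by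
  have hsum : (lin a * lin b' + lin b * lin a' : GrassmannExt B k) =
      ∑ i, ∑ j, const (a i * b' j - b j * a' i) * (oddVar i * oddVar j) := by
    rw [lin_mul_lin, lin_mul_lin b, Finset.sum_comm (f := fun i j ↦ const (b i * a' j) * _),
      ← Finset.sum_add_distrib]
    refine Finset.sum_congr rfl fun i _ ↦ ?_
    rw [← Finset.sum_add_distrib]
    refine Finset.sum_congr rfl fun j _ ↦ ?_
    rw [oddVar_mul_swap j i, map_sub, sub_mul, mul_neg, sub_eq_add_neg]
  have hneg : (lin a * lin b' + lin b * lin a' : GrassmannExt B k) =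
      -(lin a * lin b' + lin b * lin a') := by
    conv_rhs => rw [hsum, Finset.sum_comm, ← Finset.sum_neg_distrib]
    rw [hsum]
    refine Finset.sum_congr rfl fun i _ ↦ ?_
    rw [← Finset.sum_neg_distrib]
    refine Finset.sum_congr rfl fun j _ ↦ ?_
    rw [oddVar_mul_swap i j, h, mul_neg]
  exact eq_neg_of_add_eq_zero_left (eq_zero_of_eq_neg hneg)

lemma commute_const_lin {b : B} {c : Fin k → B} (h : ∀ i, Commute b (c i)) :
    Commute (const b : GrassmannExt B k) (lin c) :=
  Commute.sum_right _ _ _ fun i _ ↦ ((h i).map const).mul_right (commute_oddVar_const i b).symm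

lemma oddVar_mul_lin (i : Fin k) (c : Fin k → B) :
    (oddVar i * lin c : GrassmannExt B k) = -(lin c * oddVar i) := by
  simp only [lin, Finset.mul_sum, Finset.sum_mul, ← Finset.sum_neg_distrib]
  refine Finset.sum_congr rfl fun j _ ↦ ?_
  rw [← mul_assoc, (commute_oddVar_const i _).eq, mul_assoc, oddVar_mul_swap, mul_neg, mul_assoc]

end GrassmannExt

section OrderedProducts

variable {Ω : Type*} [Ring Ω]

lemma mul_prod_ofFn_of_exchange : ∀ {k : ℕ} {a : Fin (k + 1) → Ω} {f g : Fin k → Ω},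
    (∀ t, a t.castSucc * f t = -(g t * a t.succ)) →
    a 0 * (List.ofFn f).prod = (-1) ^ k * ((List.ofFn g).prod * a (Fin.last k))
  | 0, a, f, g, _ => by simp
  | k + 1, a, f, g, h => by
    have ih := mul_prod_ofFn_of_exchange (a := fun t ↦ a t.succ) (f := fun t ↦ f t.succ)
      (g := fun t ↦ g t.succ) fun t ↦ h t.succ
    simp only [Fin.succ_zero_eq_one, Fin.succ_last] at ih
    have h0 : a 0 * f 0 = -(g 0 * a 1) := h 0
    rw [List.ofFn_succ, List.prod_cons, ← mul_assoc, h0, neg_mul, mul_assoc, ih, List.ofFn_succ,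
      List.prod_cons, ← mul_assoc, ((Commute.neg_one_right (g 0)).pow_right k).eq, pow_succ]
    simp only [mul_neg, mul_one, neg_mul, mul_assoc]

/-- The product of the entries with index at least `k`; complementary to `Fin.partialProd`. -/
def suffixProd {n : ℕ} (f : Fin n → Ω) (k : Fin (n + 1)) : Ω := ((List.ofFn f).drop k).prod

section Suffix

variable {n : ℕ} (f : Fin n → Ω)

lemma suffixProd_zero : suffixProd f 0 = (List.ofFn f).prod := rfl

lemma suffixProd_last : suffixProd f (Fin.last n) = 1 := by
  rw [suffixProd, List.drop_eq_nil_of_le (by simp), List.prod_nil]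

lemma suffixProd_castSucc (k : Fin n) :
    suffixProd f k.castSucc = f k * suffixProd f k.succ := by
  rw [suffixProd, List.drop_eq_getElem_cons (by simp), List.prod_cons, List.getElem_ofFn]
  rfl

lemma partialProd_last : Fin.partialProd f (Fin.last n) = (List.ofFn f).prod := by
  rw [Fin.partialProd, Fin.val_last, List.take_of_length_le (by simp)]

variable {f}

lemma commute_partialProd {x : Ω} (h : ∀ t, Commute x (f t)) (k : Fin (n + 1)) :
    Commute x (Fin.partialProd f k) := by
  induction k using Fin.induction with
  | zero => rw [Fin.partialProd_zero]; exact Commute.one_right x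
  | succ k ih => rw [Fin.partialProd_succ]; exact ih.mul_right (h k)

end Suffix

/-- The products `θ_t(b) θ_{t+1}(c)` of consecutive members of the family `θ_0, …, θ_k` of vectors
are alternating in `(b, c)`. -/
def IsAlternating {n : ℕ} (θ : ℕ → Fin n → Ω) (k : ℕ) : Prop :=
  ∀ t < k, ∀ b c, θ t b * θ (t + 1) c = -(θ t c * θ (t + 1) b)

namespace IsAlternating

variable [Invertible (2 : Ω)] {n N : ℕ} {θ : ℕ → Fin n → Ω}

lemma partialProd_mul_eq_zero (h : IsAlternating θ N) (k : Fin (n + 1)) (hk : k ≤ N) (b : Fin n)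
    (hb : b.castSucc < k) : Fin.partialProd (fun t ↦ θ t t) k * θ k b = 0 := by
  induction k using Fin.induction with
  | zero => exact absurd hb (Fin.not_lt_zero _)
  | succ k ih =>
    rw [Fin.val_succ] at hk ⊢
    rw [Fin.partialProd_succ, mul_assoc]
    obtain rfl | hne := eq_or_ne b k
    · rw [eq_zero_of_eq_neg (h b hk b b), mul_zero]
    · have hlt : b.castSucc < k.castSucc := lt_of_le_of_ne (Fin.le_castSucc_iff.mpr hb) (by simpa)
      rw [h k hk, mul_neg, ← mul_assoc, ← Fin.val_castSucc, ih (Nat.le_of_succ_le hk) hlt, zero_mul,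
        neg_zero]

lemma mul_suffixProd_eq_zero (h : IsAlternating θ N) (hn : n ≤ N + 1) (k : Fin (n + 1)) {t : ℕ}
    (ht : t + 1 = k) (b : Fin n) (hb : k ≤ b.castSucc) :
    θ t b * suffixProd (fun t ↦ θ t t) k = 0 := by
  induction k using Fin.reverseInduction generalizing t b with
  | last => exact absurd hb (not_le.mpr (Fin.castSucc_lt_last b))
  | cast k ih =>
    rw [Fin.val_castSucc] at ht
    have htN : t < N := by omega
    rw [suffixProd_castSucc, ← mul_assoc, ← ht]
    obtain rfl | hne := eq_or_ne b k
    · rw [eq_zero_of_eq_neg (h t htN b b), zero_mul]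
    · have hlt : k.succ ≤ b.castSucc := by
        rw [Fin.succ_le_castSucc_iff]
        exact lt_of_le_of_ne hb (Ne.symm hne)
      rw [h t htN, neg_mul, mul_assoc, ht, ih (by simp) b hlt, mul_zero, neg_zero]

end IsAlternating

end OrderedProducts

/-! ### The Capelli determinant of the even block -/

section CapelliDet

open GrassmannExt

variable {B : Type*} [Ring B] {k m : ℕ}

/-- The Capelli determinant `Det[(M − v − i + 1)_{ij}]`, where `Det` is the column determinant. -/
def capelliDet (M : Matrix (Fin k) (Fin k) B) (v : B) : B :=
  orderedDet (M - Matrix.diagonal fun t : Fin k ↦ v + (t : ℕ))ᵀ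

/-- The entries of `M` satisfy the commutation relations of the matrix units of `gl`. -/
def IsGlMatrix (M : Matrix (Fin k) (Fin k) B) : Prop :=
  ∀ a i b j, M a i * M b j - M b j * M a i =
    (if i = b then M a j else 0) - (if j = a then M b i else 0)

/-- The linear form whose coefficients are column `j` of `M − x`. -/
def columnForm (M : Matrix (Fin k) (Fin k) B) (x : B) (j : Fin k) : GrassmannExt B k :=
  lin ((M - Matrix.scalar _ x)ᵀ j)

/-- The row of cofactors of column `0` in the column determinant `capelliDet M v`, realized as
`(−1)^m ∫ ψ_1(v) ψ_2(v+1) ⋯ ψ_m(v+m−1) χ_i` with `ψ_j(x)` the column forms of `M`. -/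
def cofactorRow (M : Matrix (Fin (m + 1)) (Fin (m + 1)) B) (v : B) (i : Fin (m + 1)) : B :=
  (-1) ^ m * berezin
    ((List.ofFn fun t : Fin m ↦ columnForm M (v + (t : ℕ)) t.succ).prod * oddVar i)

lemma columnForm_mul_columnForm [Invertible (2 : B)] {M : Matrix (Fin k) (Fin k) B}
    (hM : IsGlMatrix M) {x : B} (hx : ∀ b, Commute x b) (i j : Fin k) :
    columnForm M x i * columnForm M (x + 1) j = -(columnForm M x j * columnForm M (x + 1) i) := by
  refine lin_mul_lin_eq_neg fun a b ↦ ?_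
  simp only [Matrix.transpose_apply, Matrix.sub_apply, Matrix.scalar_apply, Matrix.diagonal_apply]
  have h1 := hM a i b j
  have h2 := hM b i a j
  have hx' : ∀ b, b * x = x * b := fun b ↦ ((hx b).eq).symm
  simp only [eq_comm (a := i), eq_comm (a := j)] at h1 h2
  rw [sub_eq_iff_eq_add] at h1 h2
  split_ifs at h1 h2 ⊢ <;> simp only [sub_mul, mul_sub, mul_add, h1, h2, hx'] <;> noncomm_ring

lemma commute_const_columnForm {M : Matrix (Fin k) (Fin k) B} {x b : B} {j : Fin k}
    (hM : ∀ i, Commute b (M i j)) (hx : Commute b x) :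
    Commute (const b) (columnForm M x j) := by
  refine commute_const_lin fun i ↦ ?_
  rw [Matrix.transpose_apply, Matrix.sub_apply, Matrix.scalar_apply, Matrix.diagonal_apply]
  split_ifs with h
  · exact (hM i).sub_right hx
  · exact (hM i).sub_right (Commute.zero_right b)

lemma capelliDet_eq_berezin (M : Matrix (Fin k) (Fin k) B) (v : B) :
    capelliDet M v =
      berezin (List.ofFn fun t : Fin k ↦ columnForm M (v + (t : ℕ)) t).prod := by
  rw [capelliDet, ← berezin_prod_lin]
  congr 4 with t
  simp only [columnForm]
  congr 1 with i
  simp only [Matrix.transpose_apply, Matrix.sub_apply, Matrix.scalar_apply, Matrix.diagonal_apply]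
  split_ifs with h
  · rw [h]
  · rfl

lemma neg_one_pow_mul_berezin_of_exchange {l : ℕ} {a : Fin (l + 1) → GrassmannExt B k}
    {f g : Fin l → GrassmannExt B k} (h : ∀ t, a t.castSucc * f t = -(g t * a t.succ)) :
    (-1) ^ l * berezin ((List.ofFn g).prod * a (Fin.last l)) =
      berezin (a 0 * (List.ofFn f).prod) := by
  rw [mul_prod_ofFn_of_exchange h, ← berezin_const_mul, map_pow, map_neg, map_one]

section Cofactor

variable {M : Matrix (Fin (m + 1)) (Fin (m + 1)) B} {v : B}

variable (M v) in
lemma cofactorRow_dotProduct (c : Fin (m + 1) → B) :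
    cofactorRow M v ⬝ᵥ c = (-1) ^ m * berezin
      ((List.ofFn fun t : Fin m ↦ columnForm M (v + (t : ℕ)) t.succ).prod *
        lin c) := by
  simp only [dotProduct, cofactorRow, mul_assoc, ← berezin_mul_const,
    (commute_oddVar_const _ _).eq, ← Finset.mul_sum, ← map_sum, lin]

lemma commute_cofactorRow {b : B} (hM : ∀ i (j : Fin m), Commute b (M i j.succ))
    (hv : Commute b v) (i : Fin (m + 1)) : Commute b (cofactorRow M v i) := by
  have hprod : Commute (const b)
      ((List.ofFn fun t : Fin m ↦ columnForm M (v + (t : ℕ)) t.succ).prod *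
        oddVar i) := by
    refine (Commute.list_prod_right _ _ fun z hz ↦ ?_).mul_right
      (commute_oddVar_const i b).symm
    obtain ⟨t, rfl⟩ := (List.mem_ofFn' _ _).mp hz
    exact commute_const_columnForm (fun i ↦ hM i t) (hv.add_right (Nat.cast_commute _ b).symm)
  refine ((Commute.neg_one_right b).pow_right m).mul_right ?_
  rw [Commute, SemiconjBy, ← berezin_const_mul, hprod.eq,
    berezin_mul_const]

variable [Invertible (2 : B)]

lemma columnForm_add_mul_columnForm (hM : IsGlMatrix M) (hv : ∀ b, Commute v b) (t : ℕ)
    (i j : Fin (m + 1)) :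
    columnForm M (v + t) i * columnForm M (v + (t + 1 : ℕ)) j =
      -(columnForm M (v + t) j * columnForm M (v + (t + 1 : ℕ)) i) := by
  rw [Nat.cast_succ, ← add_assoc]
  exact columnForm_mul_columnForm hM (fun b ↦ (hv b).add_left (Nat.cast_commute t b)) i j

lemma cofactorRow_vecMul (hM : IsGlMatrix M) (hv : ∀ b, Commute v b) :
    cofactorRow M v ᵥ* (M - Matrix.scalar _ (v + m)) = Pi.single 0 (capelliDet M v) := by
  have hcol (j) : (cofactorRow M v ᵥ* (M - Matrix.scalar _ (v + m))) j = (-1) ^ m * berezin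
      ((List.ofFn fun t : Fin m ↦ columnForm M (v + (t : ℕ)) t.succ).prod *
        columnForm M (v + m) j) :=
    cofactorRow_dotProduct M v _
  ext j
  rw [hcol]
  cases j using Fin.cases with
  | zero =>
    have hexchange := neg_one_pow_mul_berezin_of_exchange
      (a := fun t : Fin (m + 1) ↦ columnForm M (v + (t : ℕ)) 0)
      (f := fun t : Fin m ↦ columnForm M (v + (t + 1 : ℕ)) t.succ)
      (g := fun t : Fin m ↦ columnForm M (v + (t : ℕ)) t.succ)
      fun t ↦ columnForm_add_mul_columnForm hM hv t 0 t.succ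
    rw [Pi.single_eq_same, capelliDet_eq_berezin, List.ofFn_succ, List.prod_cons]
    exact hexchange
  | succ j =>
    have hvanish := IsAlternating.partialProd_mul_eq_zero (N := m)
      (θ := fun t (b : Fin m) ↦ columnForm M (v + (t : ℕ)) b.succ)
      (fun t _ b c ↦ columnForm_add_mul_columnForm hM hv t b.succ c.succ) (Fin.last m) le_rfl j
      (Fin.castSucc_lt_last j)
    rw [partialProd_last] at hvanish
    rw [Fin.val_last] at hvanish
    rw [hvanish, map_zero, mul_zero, Pi.single_eq_of_ne (Fin.succ_ne_zero j)]

lemma lin_cons_mul_lin_cons (hv : ∀ b, Commute v b) {F : Matrix (Fin m) (Fin m) B}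
    {y d : Fin m → B} (hM0 : ∀ b, M 0 b.succ = d b)
    (hMsucc : ∀ a b, M a.succ b.succ = y a * d b + F a b)
    (hyy : ∀ a b, Commute (y a) (y b)) (hFy : ∀ i j a, Commute (F i j) (y a))
    (hdy : ∀ b a, d b * y a = y a * d b + if b = a then 1 else 0) (t : Fin m) :
    lin (Fin.cons 1 y) * lin (Fin.cons 0 ((F - Matrix.scalar _ (v + 1 + (t : ℕ)))ᵀ t)) =
      -(columnForm M (v + (t : ℕ)) t.succ * lin (Fin.cons 1 y)) := by
  set M' := (M - Matrix.scalar _ (v + (t : ℕ)))ᵀ with hM'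
  set F' := (F - Matrix.scalar _ (v + 1 + (t : ℕ)))ᵀ with hF'
  have hM'0 : M' t.succ 0 = d t := by
    simp [hM', hM0]
  have hM'succ (c) : M' t.succ c.succ = y c * d t + F' t c + if t = c then 1 else 0 := by
    simp only [hM', hF', Matrix.transpose_apply, Matrix.sub_apply, hMsucc, Matrix.scalar_apply,
      Matrix.diagonal_apply, Fin.succ_inj, eq_comm (a := c)]
    split_ifs <;> noncomm_ring
  have hF'y (c a) : F' t c * y a = y a * F' t c := by
    simp only [hF', Matrix.transpose_apply, Matrix.sub_apply, Matrix.scalar_apply,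
      Matrix.diagonal_apply]
    refine (hFy c t a).sub_left ?_
    split_ifs
    · exact ((hv _).add_left (Commute.one_left _)).add_left (Nat.cast_commute _ _)
    · exact Commute.zero_left _
  have h0 (c) : 1 * F' t c - M' t.succ c.succ * 1 = y c * 0 - M' t.succ 0 * y c := by
    rw [hM'0, hM'succ, hdy]
    noncomm_ring
  refine lin_mul_lin_eq_neg <| Fin.cases (Fin.cases rfl h0) fun a ↦
    Fin.cases (h0 a).symm fun c ↦ ?_
  have hsucc (a c) : y a * F' t c - M' t.succ c.succ * y a =
      -(y c * y a * d t) - (if t = a then y c else 0) - (if t = c then y a else 0) := by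
    rw [hM'succ, add_mul, add_mul, hF'y, mul_assoc (y c), hdy]
    split_ifs <;> noncomm_ring
  change y a * F' t c - M' t.succ c.succ * y a = y c * F' t a - M' t.succ a.succ * y c
  rw [hsucc, hsucc, (hyy c a).eq, sub_right_comm]

lemma cofactorRow_dotProduct_cons (hv : ∀ b, Commute v b) {F : Matrix (Fin m) (Fin m) B}
    {y d : Fin m → B} (hM0 : ∀ b, M 0 b.succ = d b)
    (hMsucc : ∀ a b, M a.succ b.succ = y a * d b + F a b)
    (hyy : ∀ a b, Commute (y a) (y b)) (hFy : ∀ i j a, Commute (F i j) (y a))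
    (hdy : ∀ b a, d b * y a = y a * d b + if b = a then 1 else 0) :
    cofactorRow M v ⬝ᵥ Fin.cons 1 y = capelliDet F (v + 1) := by
  have hminor : capelliDet F (v + 1) = orderedDet (Matrix.of <| Fin.cons (Fin.cons 1 y)
      fun t ↦ Fin.cons 0 ((F - Matrix.scalar _ (v + 1 + (t : ℕ)))ᵀ t)) := by
    rw [orderedDet_eq_orderedDet_submatrix_succ rfl fun t ↦ rfl, capelliDet]
    congr 1 with t i
    simp only [Matrix.transpose_apply, Matrix.sub_apply, Matrix.diagonal_apply]
    obtain rfl | h := eq_or_ne i t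
    · simp [Matrix.of_apply]
    · simp [Matrix.diagonal_apply_ne _ h.symm, h]
  rw [cofactorRow_dotProduct, neg_one_pow_mul_berezin_of_exchange (a := fun _ ↦ lin (Fin.cons 1 y))
    (lin_cons_mul_lin_cons hv hM0 hMsucc hyy hFy hdy), hminor, ← berezin_prod_lin, List.ofFn_succ,
    List.prod_cons]
  rfl

end Cofactor

end CapelliDet

/-! ### Block factorization of the image matrix -/

lemma inverse_eq_of_mul_eq_one {A : Type*} [MonoidWithZero A] {a b : A} (hab : a * b = 1)
    (hba : b * a = 1) : Ring.inverse a = b :=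
  Ring.inverse_unit ⟨a, b, hab, hba⟩

lemma commute_ringInverse {A : Type*} [MonoidWithZero A] {a b : A} (h : Commute a b) :
    Commute (Ring.inverse a) b := by
  by_cases ha : IsUnit a
  · obtain ⟨u, rfl⟩ := ha
    rw [Ring.inverse_unit]
    exact h.units_inv_left
  · rw [Ring.inverse_non_unit a ha]
    exact Commute.zero_left b

lemma map_ringInverse {A B : Type*} [Semiring A] [Semiring B] (f : A →+* B) {a : A}
    (h : IsUnit a) : f (Ring.inverse a) = Ring.inverse (f a) :=
  (inverse_eq_of_mul_eq_one (by rw [← map_mul, Ring.mul_inverse_cancel a h, map_one])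
    (by rw [← map_mul, Ring.inverse_mul_cancel a h, map_one])).symm

/-- The resolvent `(A − u)⁻¹`, with the value `0` when `A − u` is not invertible. -/
def matrixResolvent {B ι : Type*} [Ring B] [Fintype ι] [DecidableEq ι] (A : Matrix ι ι B) (u : B) :
    Matrix ι ι B :=
  Ring.inverse (A - Matrix.scalar _ u)

section Shear

variable {B ι l : Type*} [Ring B] [Fintype ι] [DecidableEq ι] [Fintype l] [DecidableEq l]

/-- The block unipotent matrix `[[1, 0], [y, 1]]`. -/
def shear (y : Matrix ι l B) : Matrix (l ⊕ ι) (l ⊕ ι) B := Matrix.fromBlocks 1 0 y 1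

/-- The block matrix `[[κ − d y, d], [y (κ − d y) − F y, y d + F]]`.  With `y` the column of the
`t_a/t_0` and `d` the row of the `t_0 ∂_b` it holds the images of the generators under `φ_R`. -/
def dressedBlocks (F : Matrix ι ι B) (y : Matrix ι l B) (d : Matrix l ι B) (κ : Matrix l l B) :
    Matrix (l ⊕ ι) (l ⊕ ι) B :=
  Matrix.fromBlocks (κ - d * y) d (y * (κ - d * y) - F * y) (y * d + F)

lemma shear_mul_shear_neg (y : Matrix ι l B) : shear y * shear (-y) = 1 := by
  simp [shear, Matrix.fromBlocks_multiply]

lemma shear_neg_mul_shear (y : Matrix ι l B) : shear (-y) * shear y = 1 := by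
  simpa only [neg_neg] using shear_mul_shear_neg (-y)

lemma isUnit_shear (y : Matrix ι l B) : IsUnit (shear y) :=
  ⟨⟨_, _, shear_mul_shear_neg y, shear_neg_mul_shear y⟩, rfl⟩

lemma inverse_shear (y : Matrix ι l B) : Ring.inverse (shear y) = shear (-y) :=
  inverse_eq_of_mul_eq_one (shear_mul_shear_neg y) (shear_neg_mul_shear y)

lemma fromBlocks_sub_scalar (P : Matrix l l B) (Q : Matrix l ι B) (S : Matrix ι l B)
    (F : Matrix ι ι B) (u : B) :
    Matrix.fromBlocks P Q S F - Matrix.scalar _ u =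
      Matrix.fromBlocks (P - Matrix.scalar _ u) Q S (F - Matrix.scalar _ u) := by
  ext (i | i) (j | j) <;> simp [Matrix.diagonal_apply]

lemma dressedBlocks_sub_scalar_mul_shear (F : Matrix ι ι B) (y : Matrix ι l B) (d : Matrix l ι B)
    (κ : Matrix l l B) {u : B} (hu : ∀ b, Commute u b) :
    (dressedBlocks F y d κ - Matrix.scalar _ u) * shear y =
      shear y * Matrix.fromBlocks (κ - Matrix.scalar _ u) d 0 (F - Matrix.scalar _ u) := by
  have hy : Matrix.scalar ι u * y = y * Matrix.scalar l u := by
    ext i j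
    simp only [Matrix.scalar_apply, Matrix.diagonal_mul, Matrix.mul_diagonal, (hu _).eq]
  rw [dressedBlocks, fromBlocks_sub_scalar, shear, Matrix.fromBlocks_multiply,
    Matrix.fromBlocks_multiply]
  congr 1 <;> simp only [mul_one, one_mul, Matrix.mul_one, Matrix.mul_zero,
    Matrix.one_mul, Matrix.zero_mul, Matrix.sub_mul, Matrix.add_mul, Matrix.mul_sub, hy,
    Matrix.mul_assoc] <;> abel

lemma isUnit_of_isUnit_fromBlocks_zero {P : Matrix l l B} {Q : Matrix l ι B} {F : Matrix ι ι B}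
    (hcomm : ∀ S : Matrix l l B, Commute P S) (h : IsUnit (Matrix.fromBlocks P Q 0 F)) :
    IsUnit P ∧ IsUnit F := by
  obtain ⟨⟨_, W, hl, hr⟩, rfl⟩ := h
  rw [← W.fromBlocks_toBlocks, Matrix.fromBlocks_multiply, ← Matrix.fromBlocks_one,
    Matrix.fromBlocks_inj] at hl hr
  simp only [Matrix.zero_mul, Matrix.mul_zero, add_zero, zero_add] at hl hr
  obtain ⟨-, -, -, hFW⟩ := hl
  obtain ⟨hWP, -, hzero, hWF⟩ := hr
  have hPW : P * W.toBlocks₁₁ = 1 := (hcomm _).trans hWP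
  have hW : W.toBlocks₂₁ = 0 := by
    rw [← Matrix.mul_one W.toBlocks₂₁, ← hPW, ← Matrix.mul_assoc, hzero, Matrix.zero_mul]
  rw [hW, Matrix.zero_mul, zero_add] at hWF
  exact ⟨⟨⟨_, _, hPW, hWP⟩, rfl⟩, ⟨⟨_, _, hFW, hWF⟩, rfl⟩⟩

lemma inverse_fromBlocks_zero {P : Matrix l l B} {F : Matrix ι ι B} (hP : IsUnit P)
    (hF : IsUnit F) (Q : Matrix l ι B) :
    Ring.inverse (Matrix.fromBlocks P Q 0 F) =
      Matrix.fromBlocks (Ring.inverse P) (-(Ring.inverse P * Q * Ring.inverse F)) 0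
        (Ring.inverse F) := by
  refine inverse_eq_of_mul_eq_one ?_ ?_ <;>
    rw [Matrix.fromBlocks_multiply, ← Matrix.fromBlocks_one] <;>
    congr 1 <;>
    simp [Ring.mul_inverse_cancel _ hP, Ring.mul_inverse_cancel _ hF, Ring.inverse_mul_cancel _ hP,
      Ring.inverse_mul_cancel _ hF, ← Matrix.mul_assoc, Matrix.mul_assoc _ (Ring.inverse F) F]

section DressedBlocks

variable {F : Matrix ι ι B} {y : Matrix ι l B} {d : Matrix l ι B} {κ : Matrix l l B} {u : B}

lemma isUnit_of_isUnit_dressedBlocks (hu : ∀ b, Commute u b)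
    (hκ : ∀ S, Commute (κ - Matrix.scalar l u) S)
    (h : IsUnit (dressedBlocks F y d κ - Matrix.scalar _ u)) :
    IsUnit (κ - Matrix.scalar l u) ∧ IsUnit (F - Matrix.scalar ι u) :=
  isUnit_of_isUnit_fromBlocks_zero hκ <| (isUnit_shear y).mul_left_iff.mp <|
    dressedBlocks_sub_scalar_mul_shear F y d κ hu ▸ h.mul (isUnit_shear y)

lemma toBlocks₂₂_matrixResolvent_dressedBlocks (hu : ∀ b, Commute u b)
    (hκ : IsUnit (κ - Matrix.scalar l u)) (hF : IsUnit (F - Matrix.scalar ι u))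
    (h : IsUnit (dressedBlocks F y d κ - Matrix.scalar _ u)) :
    (matrixResolvent (dressedBlocks F y d κ) u).toBlocks₂₂ =
      matrixResolvent F u - y * (matrixResolvent κ u * (d * matrixResolvent F u)) := by
  simp only [matrixResolvent]
  have hinv := congrArg Ring.inverse (dressedBlocks_sub_scalar_mul_shear F y d κ hu)
  rw [Ring.inverse_mul (.inl h), Ring.inverse_mul (.inl (isUnit_shear y)),
    inverse_fromBlocks_zero hκ hF, inverse_shear] at hinv
  have hcancel := congrArg (shear y * ·) hinv
  simp only [← mul_assoc, shear_mul_shear_neg, one_mul] at hcancel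
  rw [hcancel, shear, shear, Matrix.fromBlocks_multiply, Matrix.fromBlocks_multiply,
    Matrix.toBlocks_fromBlocks₂₂]
  simp only [Matrix.mul_one, Matrix.mul_zero, Matrix.one_mul, Matrix.mul_neg, zero_add,
    Matrix.mul_assoc]
  abel

end DressedBlocks

end Shear

section PhiMatrix

variable {m n : ℕ} {B : Type*} [Ring B]

/-- The decomposition `Î = {0} ∪ I`. -/
def indSuccEquiv : Unit ⊕ Ind m n ≃ Ind (m + 1) n where
  toFun := Sum.elim (fun _ ↦ z0) emb
  invFun := Sum.elim (Fin.cases (Sum.inl ()) (Sum.inr ∘ Sum.inl)) (Sum.inr ∘ Sum.inr)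
  left_inv := by rintro (- | - | -) <;> rfl
  right_inv := Sum.rec (Fin.cases rfl fun _ ↦ rfl) fun _ ↦ rfl

/-- The matrix `dressedBlocks F y d κ` for a single column `y` and row `d`, indexed by `Î`. -/
def phiMatrix (F : Matrix (Ind m n) (Ind m n) B) (y d : Ind m n → B) (κ : B) :
    Matrix (Ind (m + 1) n) (Ind (m + 1) n) B :=
  Matrix.reindexRingEquiv B indSuccEquiv
    (dressedBlocks F (Matrix.replicateCol Unit y) (Matrix.replicateRow Unit d) (Matrix.scalar _ κ))

variable {F : Matrix (Ind m n) (Ind m n) B} {y d : Ind m n → B} {κ u : B}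

lemma phiMatrix_z0_z0 : phiMatrix F y d κ z0 z0 = κ - d ⬝ᵥ y := rfl

lemma phiMatrix_z0_emb (b : Ind m n) : phiMatrix F y d κ z0 (emb b) = d b := by
  obtain b | b := b <;> rfl

lemma phiMatrix_emb_z0 (a : Ind m n) :
    phiMatrix F y d κ (emb a) z0 = y a * (κ - d ⬝ᵥ y) - (F *ᵥ y) a := by
  obtain a | a := a <;>
    simp [phiMatrix, dressedBlocks, emb, indSuccEquiv, z0, Matrix.mul_apply, Matrix.mulVec,
      dotProduct]

lemma phiMatrix_emb_emb (a b : Ind m n) :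
    phiMatrix F y d κ (emb a) (emb b) = y a * d b + F a b := by
  obtain a | a := a <;> obtain b | b := b <;>
    simp [phiMatrix, dressedBlocks, emb, indSuccEquiv, Matrix.mul_apply]

lemma phiMatrix_sub_scalar : phiMatrix F y d κ - Matrix.scalar _ u =
    Matrix.reindexRingEquiv B indSuccEquiv (dressedBlocks F (Matrix.replicateCol Unit y)
      (Matrix.replicateRow Unit d) (Matrix.scalar _ κ) - Matrix.scalar _ u) := by
  rw [map_sub, phiMatrix]
  congr 1
  simp

lemma isUnit_scalar_unit_iff {x : B} : IsUnit (Matrix.scalar Unit x) ↔ IsUnit x := by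
  refine ⟨?_, fun h ↦ h.map _⟩
  rintro ⟨⟨_, W, hl, hr⟩, rfl⟩
  exact ⟨⟨x, W () (), by simpa using congrFun₂ hl () (), by simpa using congrFun₂ hr () ()⟩, rfl⟩

lemma isUnit_of_isUnit_phiMatrix (hκ : ∀ b, Commute κ b) (hu : ∀ b, Commute u b)
    (h : IsUnit (phiMatrix F y d κ - Matrix.scalar _ u)) :
    IsUnit (κ - u) ∧ IsUnit (F - Matrix.scalar _ u) := by
  rw [phiMatrix_sub_scalar, isUnit_map_iff] at h
  rw [← isUnit_scalar_unit_iff, map_sub]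
  refine isUnit_of_isUnit_dressedBlocks hu (fun S ↦ ?_) h
  rw [← map_sub]
  exact Matrix.scalar_commute _ (fun b ↦ (hκ b).sub_left (hu b)) S

lemma matrixResolvent_phiMatrix_emb_emb (hκ : ∀ b, Commute κ b) (hu : ∀ b, Commute u b)
    (h : IsUnit (phiMatrix F y d κ - Matrix.scalar _ u)) (a b : Ind m n) :
    matrixResolvent (phiMatrix F y d κ) u (emb a) (emb b) =
      matrixResolvent F u a b - y a * (Ring.inverse (κ - u) * (d ᵥ* matrixResolvent F u) b) := by
  obtain ⟨hκu, hF⟩ := isUnit_of_isUnit_phiMatrix hκ hu h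
  have hκu' := hκu.map (Matrix.scalar Unit)
  rw [phiMatrix_sub_scalar, isUnit_map_iff] at h
  rw [map_sub] at hκu'
  have hblock := congrFun₂ (toBlocks₂₂_matrixResolvent_dressedBlocks hu hκu' hF h) a b
  rw [matrixResolvent.eq_def (Matrix.scalar Unit κ), ← map_sub, ← map_ringInverse _ hκu] at hblock
  rw [matrixResolvent, phiMatrix_sub_scalar, ← RingEquiv.coe_toRingHom, ← map_ringInverse _ h]
  obtain a | a := a <;> obtain b | b := b <;>
    exact hblock.trans (by simp [Matrix.mul_apply, Matrix.vecMul, dotProduct])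

end PhiMatrix

/-! ### The row of mixed minors -/

section EvenRow

variable {m n : ℕ} {B : Type*} [Ring B] {F : Matrix (Ind m n) (Ind m n) B} {y d : Ind m n → B}
  {κ : B}

/-- The row indexed by `I` obtained from a row indexed by the even part of `Î`, dropping the
entry at `0` and filling in zeros. -/
def evenTail (g : Fin (m + 1) → B) : Ind m n → B := Sum.elim (fun a ↦ g a.succ) 0

lemma dotProduct_cons_one (g : Fin (m + 1) → B) (y : Fin m → B) :
    g ⬝ᵥ Fin.cons 1 y = g 0 + ∑ a : Fin m, g a.succ * y a := by
  simp [dotProduct, Fin.sum_univ_succ]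

lemma evenTail_dotProduct (g : Fin (m + 1) → B) (x : Ind m n → B) :
    evenTail g ⬝ᵥ x = ∑ a : Fin m, g a.succ * x (Sum.inl a) := by
  simp [dotProduct, evenTail]

lemma sum_mul_phiMatrix_emb (g : Fin (m + 1) → B) (b : Ind m n) :
    ∑ i, g i * phiMatrix F y d κ (Sum.inl i) (emb b) =
      (g ⬝ᵥ Fin.cons 1 (y ∘ Sum.inl)) * d b + (evenTail g ᵥ* F) b := by
  have h0 : phiMatrix F y d κ (Sum.inl 0) (emb b) = d b := phiMatrix_z0_emb b
  have hsucc (a : Fin m) : phiMatrix F y d κ (Sum.inl a.succ) (emb b) = _ :=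
    phiMatrix_emb_emb (Sum.inl a) b
  rw [dotProduct_cons_one, Matrix.vecMul, evenTail_dotProduct, Fin.sum_univ_succ, h0]
  simp only [hsucc, mul_add, Finset.sum_add_distrib, add_mul, Finset.sum_mul, mul_assoc,
    Function.comp_apply, add_assoc]

lemma sum_mul_phiMatrix_z0 (g : Fin (m + 1) → B) :
    ∑ i, g i * phiMatrix F y d κ (Sum.inl i) z0 =
      (g ⬝ᵥ Fin.cons 1 (y ∘ Sum.inl)) * (κ - d ⬝ᵥ y) - (evenTail g ᵥ* F) ⬝ᵥ y := by
  have h0 : phiMatrix F y d κ (Sum.inl 0) z0 = κ - d ⬝ᵥ y := phiMatrix_z0_z0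
  have hsucc (a : Fin m) : phiMatrix F y d κ (Sum.inl a.succ) z0 = _ :=
    phiMatrix_emb_z0 (Sum.inl a)
  rw [← Matrix.dotProduct_mulVec, dotProduct_cons_one, evenTail_dotProduct, Fin.sum_univ_succ, h0]
  simp only [hsucc, mul_sub _ _ ((F *ᵥ y) _), Finset.sum_sub_distrib, add_mul, Finset.sum_mul,
    mul_assoc, Function.comp_apply, add_sub_assoc]

end EvenRow

/-- `F` satisfies the relations of the matrix units `(−1)^|i| e_{ij}` of `gl(m|n)`, `y` and `d`
satisfy those of `(−1)^|a| t_a/t_0` and `t_0 ∂_b`, and both supercommute with `F`. -/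
structure IsGlWeylSystem {m n : ℕ} {B : Type*} [Ring B] (F : Matrix (Ind m n) (Ind m n) B)
    (y d : Ind m n → B) : Prop where
  F_mul_F (i j k l) : (-1) ^ ((pI i + pI j) * pI k) * (F i j * F k l) -
      (-1) ^ ((pI i + pI j) * pI l) * (F k l * F i j) =
    (-1) ^ (pI i * pI j) * ((if j = k then F i l else 0) - (if l = i then F k j else 0))
  F_mul_y (i j a) : (-1) ^ (pI a * pI j) * (F i j * y a) = (-1) ^ (pI a * pI i) * (y a * F i j)
  F_mul_d (i j a) : (-1) ^ (pI a * pI j) * (F i j * d a) = (-1) ^ (pI a * pI i) * (d a * F i j)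
  y_mul_y (a b) : y a * y b = (-1) ^ (pI a * pI b) * (y b * y a)
  d_mul_y (a b) :
    d b * y a = (-1) ^ (pI a * pI b) * (y a * d b) + if a = b then (-1) ^ pI a else 0

section MixedRow

variable {m n : ℕ} {B : Type*} [Ring B] {F : Matrix (Ind m n) (Ind m n) B} {y d : Ind m n → B}
  {κ v : B}

variable (F y d κ v) in
/-- The row of mixed minors `Σ_i g_i N_{i b̄}`, where `g` is the cofactor row of the even block
of `N = phiMatrix F y d κ`. -/
def mixedRow (b : Fin n) : B :=
  ∑ i, cofactorRow (phiMatrix F y d κ).toBlocks₁₁ v i * phiMatrix F y d κ (Sum.inl i) (Sum.inr b)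

lemma toBlocks₁₁_phiMatrix_zero (b : Fin m) :
    (phiMatrix F y d κ).toBlocks₁₁ 0 b.succ = d (Sum.inl b) :=
  phiMatrix_z0_emb (F := F) (y := y) (κ := κ) (Sum.inl b)

lemma toBlocks₁₁_phiMatrix_succ (a b : Fin m) :
    (phiMatrix F y d κ).toBlocks₁₁ a.succ b.succ =
      y (Sum.inl a) * d (Sum.inl b) + F (Sum.inl a) (Sum.inl b) :=
  phiMatrix_emb_emb (κ := κ) (Sum.inl a) (Sum.inl b)

namespace IsGlWeylSystem

lemma cofactorRow_phiMatrix_dotProduct [Invertible (2 : B)] (h : IsGlWeylSystem F y d)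
    (hv : ∀ b, Commute v b) :
    cofactorRow (phiMatrix F y d κ).toBlocks₁₁ v ⬝ᵥ Fin.cons 1 (y ∘ Sum.inl) =
      capelliDet F.toBlocks₁₁ (v + 1) := by
  refine cofactorRow_dotProduct_cons hv (d := d ∘ Sum.inl) toBlocks₁₁_phiMatrix_zero
    toBlocks₁₁_phiMatrix_succ (fun a b ↦ ?_) (fun i j a ↦ ?_) fun b a ↦ ?_
  · simpa [pI, Commute, SemiconjBy] using h.y_mul_y (Sum.inl a) (Sum.inl b)
  · simpa [pI, Commute, SemiconjBy, Matrix.toBlocks₁₁] using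
      h.F_mul_y (Sum.inl i) (Sum.inl j) (Sum.inl a)
  · simpa [pI, eq_comm (a := b)] using h.d_mul_y (Sum.inl a) (Sum.inl b)

lemma evenTail_vecMul_sub_scalar [Invertible (2 : B)] (h : IsGlWeylSystem F y d)
    (hv : ∀ b, Commute v b) (hN : IsGlMatrix (phiMatrix F y d κ).toBlocks₁₁) :
    evenTail (cofactorRow (phiMatrix F y d κ).toBlocks₁₁ v) ᵥ* (F - Matrix.scalar _ (v + m)) =
      Sum.elim (0 : Fin m → B) (mixedRow F y d κ v) - capelliDet F.toBlocks₁₁ (v + 1) • d := by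
  set g := cofactorRow (phiMatrix F y d κ).toBlocks₁₁ v with hg
  have hcol (b) := sum_mul_phiMatrix_emb (F := F) (y := y) (d := d) (κ := κ) g b
  rw [hg, h.cofactorRow_phiMatrix_dotProduct hv, ← hg] at hcol
  rw [Matrix.vecMul_sub, Matrix.scalar_apply]
  ext b
  rw [Pi.sub_apply, Pi.sub_apply, Matrix.vecMul_diagonal, eq_sub_iff_add_eq', ← add_sub_assoc,
    Pi.smul_apply, smul_eq_mul, ← hcol, sub_eq_iff_eq_add]
  obtain b | b := b
  · have hb := congrFun (cofactorRow_vecMul hN hv) b.succ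
    rwa [Matrix.vecMul_sub, Pi.sub_apply, Matrix.scalar_apply, Matrix.vecMul_diagonal,
      Pi.single_eq_of_ne b.succ_ne_zero, sub_eq_iff_eq_add] at hb
  · have hzero : evenTail g (Sum.inr b : Ind m n) = 0 := rfl
    rw [hzero, zero_mul, add_zero]
    rfl

lemma capelliDet_add_sum_mixedRow_mul [Invertible (2 : B)] (h : IsGlWeylSystem F y d)
    (hv : ∀ b, Commute v b) (hN : IsGlMatrix (phiMatrix F y d κ).toBlocks₁₁) :
    capelliDet (phiMatrix F y d κ).toBlocks₁₁ v + ∑ b, mixedRow F y d κ v b * y (Sum.inr b) =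
      capelliDet F.toBlocks₁₁ (v + 1) * (κ - (v + m)) := by
  set g := cofactorRow (phiMatrix F y d κ).toBlocks₁₁ v
  set δ := capelliDet F.toBlocks₁₁ (v + 1)
  have hδ : g ⬝ᵥ Fin.cons 1 (y ∘ Sum.inl) = δ := h.cofactorRow_phiMatrix_dotProduct hv
  have hw (b : B) : (v + m) * b = b * (v + m) := (hv b).add_left (Nat.cast_commute m b)
  have htail : (evenTail g ᵥ* F) ⬝ᵥ y =
      ∑ b, mixedRow F y d κ v b * y (Sum.inr b) - δ * (d ⬝ᵥ y) + (δ - g 0) * (v + m) := by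
    have htail := congrArg (· ⬝ᵥ y) (h.evenTail_vecMul_sub_scalar hv hN)
    rw [Matrix.vecMul_sub, sub_dotProduct, sub_dotProduct, smul_dotProduct, sub_eq_iff_eq_add]
      at htail
    have hscalar : (evenTail g ᵥ* Matrix.scalar (Ind m n) (v + m)) ⬝ᵥ y = (δ - g 0) * (v + m) := by
      rw [← hδ, dotProduct_cons_one, add_sub_cancel_left, Finset.sum_mul, Matrix.scalar_apply,
        ← Matrix.dotProduct_mulVec, evenTail_dotProduct]
      simp only [Matrix.mulVec_diagonal, hw, mul_assoc, Function.comp_apply]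
    rw [htail, hscalar]
    simp [dotProduct, smul_eq_mul, δ]
  have hcol : ∑ i, g i * phiMatrix F y d κ (Sum.inl i) z0 = _ := sum_mul_phiMatrix_z0 g
  have h0 := congrFun (cofactorRow_vecMul hN hv) 0
  rw [Matrix.vecMul_sub, Pi.sub_apply, Matrix.scalar_apply, Matrix.vecMul_diagonal,
    Pi.single_eq_same, sub_eq_iff_eq_add] at h0
  have := h0.symm.trans hcol
  rw [hδ, htail] at this
  rw [← sub_eq_zero] at this ⊢
  rw [← this]
  noncomm_ring

lemma sum_mixedRow_mul_matrixResolvent [Invertible (2 : B)] (h : IsGlWeylSystem F y d)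
    (hv : ∀ b, Commute v b) (hN : IsGlMatrix (phiMatrix F y d κ).toBlocks₁₁)
    (hF : IsUnit (F - Matrix.scalar _ (v + m))) (k : Fin n) :
    ∑ b, mixedRow F y d κ v b * matrixResolvent F (v + m) (Sum.inr b) (Sum.inr k) =
      capelliDet F.toBlocks₁₁ (v + 1) * (d ᵥ* matrixResolvent F (v + m)) (Sum.inr k) := by
  have htail := congrFun (congrArg (· ᵥ* matrixResolvent F (v + m))
    (h.evenTail_vecMul_sub_scalar hv hN)) (Sum.inr k)
  simp only [matrixResolvent, Matrix.vecMul_vecMul, Ring.mul_inverse_cancel _ hF,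
    Matrix.vecMul_one, Matrix.sub_vecMul, Matrix.smul_vecMul, Pi.sub_apply, Pi.smul_apply,
    smul_eq_mul, evenTail, Sum.elim_inr, Pi.zero_apply] at htail
  rw [matrixResolvent, ← sub_eq_zero.mp htail.symm, Matrix.vecMul, dotProduct,
    Fintype.sum_sum_type]
  simp only [Sum.elim_inl, Sum.elim_inr, Pi.zero_apply, zero_mul, Finset.sum_const_zero, zero_add]

lemma commute_y_cofactorRow (h : IsGlWeylSystem F y d) (hv : ∀ b, Commute v b) (a : Fin n)
    (i : Fin (m + 1)) :
    Commute (y (Sum.inr a)) (cofactorRow (phiMatrix F y d κ).toBlocks₁₁ v i) := by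
  have hyd (b : Fin m) : Commute (y (Sum.inr a)) (d (Sum.inl b)) := by
    simpa [pI, Commute, SemiconjBy] using (h.d_mul_y (Sum.inr a) (Sum.inl b)).symm
  have hyy (b : Fin m) : Commute (y (Sum.inr a)) (y (Sum.inl b)) := by
    simpa [pI, Commute, SemiconjBy] using h.y_mul_y (Sum.inr a) (Sum.inl b)
  have hyF (b c : Fin m) : Commute (y (Sum.inr a)) (F (Sum.inl b) (Sum.inl c)) := by
    simpa [pI, Commute, SemiconjBy] using (h.F_mul_y (Sum.inl b) (Sum.inl c) (Sum.inr a)).symm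
  refine commute_cofactorRow (Fin.cases (fun b ↦ ?_) fun b c ↦ ?_) (hv _).symm i
  · rw [toBlocks₁₁_phiMatrix_zero]
    exact hyd b
  · rw [toBlocks₁₁_phiMatrix_succ]
    exact ((hyy b).mul_right (hyd c)).add_right (hyF b c)

lemma commute_y_capelliDet [Invertible (2 : B)] (h : IsGlWeylSystem F y d)
    (hv : ∀ b, Commute v b) (a : Fin n) :
    Commute (y (Sum.inr a)) (capelliDet F.toBlocks₁₁ (v + 1)) := by
  rw [← h.cofactorRow_phiMatrix_dotProduct (κ := 0) hv]
  refine Commute.sum_right _ _ _ fun i _ ↦ (h.commute_y_cofactorRow hv a i).mul_right ?_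
  refine Fin.cases (Commute.one_right _) (fun b ↦ ?_) i
  simpa [pI, Commute, SemiconjBy] using h.y_mul_y (Sum.inr a) (Sum.inl b)

lemma mixedRow_mul_y [Invertible (2 : B)] (h : IsGlWeylSystem F y d) (hv : ∀ b, Commute v b)
    (a b : Fin n) :
    mixedRow F y d κ v b * y (Sum.inr a) = -(y (Sum.inr a) * mixedRow F y d κ v b) -
      if a = b then capelliDet F.toBlocks₁₁ (v + 1) else 0 := by
  have hd : d (Sum.inr b) * y (Sum.inr a) =
      -(y (Sum.inr a) * d (Sum.inr b)) - if a = b then 1 else 0 := by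
    have hdy := h.d_mul_y (Sum.inr a) (Sum.inr b)
    split_ifs at hdy ⊢ <;> simp_all [pI, sub_eq_add_neg]
  have hF (c : Fin m) : F (Sum.inl c) (Sum.inr b) * y (Sum.inr a) =
      -(y (Sum.inr a) * F (Sum.inl c) (Sum.inr b)) := by
    simpa [pI, neg_eq_iff_eq_neg] using h.F_mul_y (Sum.inl c) (Sum.inr b) (Sum.inr a)
  have hmixed : mixedRow F y d κ v b = _ := sum_mul_phiMatrix_emb _ (Sum.inr b)
  rw [hmixed, h.cofactorRow_phiMatrix_dotProduct hv, Matrix.vecMul, evenTail_dotProduct, add_mul,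
    mul_add, mul_assoc, hd, Finset.sum_mul, Finset.mul_sum, ← mul_assoc (y _),
    (h.commute_y_capelliDet hv a).eq]
  simp only [mul_assoc, hF, mul_sub, mul_neg, ← (h.commute_y_cofactorRow hv a _).left_comm,
    Finset.sum_neg_distrib, mul_ite, mul_one, mul_zero]
  abel

end IsGlWeylSystem

end MixedRow

/-! ### Commutation relations of the resolvent -/

section Resolvent

variable {B ι : Type*} [Ring B] [Fintype ι] [DecidableEq ι] {A Z : Matrix ι ι B} {u : B}

lemma commute_matrixResolvent (hu : ∀ b, Commute u b) (h : Commute Z A) :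
    Commute Z (matrixResolvent A u) := by
  by_cases hA : IsUnit (A - Matrix.scalar ι u)
  · obtain ⟨U, hU⟩ := hA
    have hZU : Commute Z U := hU ▸ h.sub_right (Matrix.scalar_commute u hu Z).symm
    rw [matrixResolvent, ← hU, Ring.inverse_unit]
    exact hZU.units_inv_right
  · rw [matrixResolvent, Ring.inverse_non_unit _ hA]
    exact Commute.zero_right Z

lemma commute_diagonal_sub_single_iff {M : Matrix ι ι B} (D : ι → B) (i j : ι) (c : B) :
    Commute (Matrix.diagonal D - Matrix.single j i c) M ↔ ∀ k l,
      D k * M k l - M k l * D l =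
        (if k = j then c * M i l else 0) - if l = i then M k j * c else 0 := by
  have hl (k l : ι) : (Matrix.single j i c * M) k l = if k = j then c * M i l else 0 := by
    split_ifs with h
    · rw [h, Matrix.single_mul_apply_same]
    · exact Matrix.single_mul_apply_of_ne _ _ _ _ _ h _
  have hr (k l : ι) : (M * Matrix.single j i c) k l = if l = i then M k j * c else 0 := by
    split_ifs with h
    · rw [h, Matrix.mul_single_apply_same]
    · exact Matrix.mul_single_apply_of_ne _ _ _ _ _ h _
  simp only [Commute, SemiconjBy, ← Matrix.ext_iff, sub_mul, mul_sub, Matrix.sub_apply,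
    Matrix.diagonal_mul, Matrix.mul_diagonal, hl, hr, sub_eq_sub_iff_sub_eq_sub]

lemma diagonal_mul_matrixResolvent {D : ι → B} (hu : ∀ b, Commute u b)
    (h : ∀ k l, D k * A k l = A k l * D l) (k l : ι) :
    D k * matrixResolvent A u k l = matrixResolvent A u k l * D l := by
  have hcomm : Commute (Matrix.diagonal D) A := by
    ext k l
    simp only [Matrix.diagonal_mul, Matrix.mul_diagonal, h]
  simpa only [Matrix.diagonal_mul, Matrix.mul_diagonal] using
    congrFun (congrFun (commute_matrixResolvent hu hcomm).eq k) l

lemma matrixResolvent_mul_matrixResolvent_sub_one (h : IsUnit (A - Matrix.scalar ι u))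
    (h' : IsUnit (A - Matrix.scalar ι (u - 1))) :
    matrixResolvent A u * matrixResolvent A (u - 1) =
      matrixResolvent A u - matrixResolvent A (u - 1) := by
  rw [matrixResolvent, matrixResolvent, Ring.inverse_sub_inverse (iff_of_true h h')]
  simp

end Resolvent

section ResolventRelations

variable {m n : ℕ} {B : Type*} [Ring B] {F : Matrix (Ind m n) (Ind m n) B} {y d : Ind m n → B}
  {u : B}

lemma mul_neg_one_pow_mul (k : ℕ) (x z : B) : x * ((-1) ^ k * z) = (-1) ^ k * (x * z) :=
  ((Commute.neg_one_right x).pow_right k).left_comm z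

namespace IsGlWeylSystem

lemma F_mul_matrixResolvent (h : IsGlWeylSystem F y d) (hu : ∀ b, Commute u b) (i j : Ind m n)
    (k l : Fin n) :
    F i j * matrixResolvent F u (Sum.inr k) (Sum.inr l) =
      matrixResolvent F u (Sum.inr k) (Sum.inr l) * F i j -
        (if Sum.inr k = j then matrixResolvent F u i (Sum.inr l) else 0) +
        if Sum.inr l = i then matrixResolvent F u (Sum.inr k) j else 0 := by
  have hsign (p : ℕ) (x : B) : x * (-1) ^ p = (-1) ^ p * x :=
    ((Commute.neg_one_left x).pow_left p).eq.symm
  have hF : Commute (Matrix.diagonal (fun k ↦ (-1) ^ ((pI i + pI j) * pI k) * F i j) -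
      Matrix.single j i ((-1) ^ (pI i * pI j))) F := by
    refine (commute_diagonal_sub_single_iff _ _ _ _).mpr fun k l ↦ ?_
    have := h.F_mul_F i j k l
    simp only [← mul_assoc, hsign, eq_comm (a := j)] at this ⊢
    rw [this, mul_sub, mul_ite, mul_ite, mul_zero]
  have key := (commute_diagonal_sub_single_iff _ _ _ _).mp (commute_matrixResolvent hu hF)
    (Sum.inr k) (Sum.inr l)
  obtain i | i := i <;> obtain j | j := j <;>
    simp only [pI, Sum.elim_inl, Sum.elim_inr, Sum.inr.injEq, reduceCtorEq, if_false, add_zero,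
      zero_add, mul_zero, mul_one, pow_zero, pow_one, one_mul, neg_mul, mul_neg, one_add_one_eq_two,
      even_two, Even.neg_pow, one_pow, sub_zero, zero_sub, sub_neg_eq_add] at key ⊢
  · exact sub_eq_zero.mp key
  · rw [← key]
    abel
  · rw [← neg_eq_iff_eq_neg.mpr key]
    abel
  · split_ifs at key ⊢ <;> rw [sub_eq_iff_eq_add.mp key] <;> abel

lemma matrixResolvent_mul_y (h : IsGlWeylSystem F y d) (hu : ∀ b, Commute u b) (c : Ind m n)
    (a k : Fin n) :
    matrixResolvent F u c (Sum.inr k) * y (Sum.inr a) =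
      -((-1) ^ pI c * y (Sum.inr a) * matrixResolvent F u c (Sum.inr k)) := by
  have key := diagonal_mul_matrixResolvent (A := F) (D := fun k ↦ (-1) ^ pI k * y (Sum.inr a)) hu
    (fun i j ↦ ?_) c (Sum.inr k)
  · rw [key]
    simp [pI]
  · simpa [pI, mul_neg_one_pow_mul, mul_assoc] using (h.F_mul_y i j (Sum.inr a)).symm

lemma commute_d_matrixResolvent (h : IsGlWeylSystem F y d) (hu : ∀ b, Commute u b) (c : Ind m n)
    (a k : Fin n) :
    Commute (d c) (matrixResolvent F u (Sum.inr a) (Sum.inr k)) := by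
  have key := diagonal_mul_matrixResolvent (A := F) (D := fun k ↦ (-1) ^ (pI c * pI k) * d c) hu
    (fun i j ↦ ?_) (Sum.inr a) (Sum.inr k)
  · obtain c | c := c <;> simpa [pI, Commute, SemiconjBy] using key
  · simpa [mul_neg_one_pow_mul, mul_assoc] using (h.F_mul_d i j c).symm

lemma vecMul_matrixResolvent_mul_y (h : IsGlWeylSystem F y d) (hu : ∀ b, Commute u b)
    (a k : Fin n) :
    (d ᵥ* matrixResolvent F u) (Sum.inr k) * y (Sum.inr a) =
      -(y (Sum.inr a) * (d ᵥ* matrixResolvent F u) (Sum.inr k)) -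
        matrixResolvent F u (Sum.inr a) (Sum.inr k) := by
  have hd (c : Ind m n) : d c * ((-1) ^ pI c * y (Sum.inr a)) =
      y (Sum.inr a) * d c + if Sum.inr a = c then 1 else 0 := by
    have hdy := h.d_mul_y (Sum.inr a) c
    obtain c | c := c
    · simpa [pI] using hdy
    · simp only [pI, Sum.elim_inr, mul_one, pow_one, neg_one_mul] at hdy ⊢
      rw [mul_neg, hdy]
      split_ifs <;> simp [add_comm]
  have hterm (c : Ind m n) : d c * matrixResolvent F u c (Sum.inr k) * y (Sum.inr a) =
      -(y (Sum.inr a) * (d c * matrixResolvent F u c (Sum.inr k))) -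
        if Sum.inr a = c then matrixResolvent F u c (Sum.inr k) else 0 := by
    rw [mul_assoc, h.matrixResolvent_mul_y hu, mul_neg, ← mul_assoc, hd, add_mul, neg_add',
      mul_assoc, ite_mul, one_mul, zero_mul]
  simp only [Matrix.vecMul, dotProduct, Finset.sum_mul, hterm, Finset.sum_sub_distrib,
    Finset.sum_neg_distrib, Finset.mul_sum, Finset.sum_ite_eq, Finset.mem_univ, if_true]

end IsGlWeylSystem

end ResolventRelations

section OddForm

open GrassmannExt

variable {m n : ℕ} {B : Type*} [Ring B] {F S : Matrix (Ind m n) (Ind m n) B} {y d : Ind m n → B}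
  {u : B}

/-- The linear forms `Σ_k A_{a k̄} ψ_k` in the odd variables given by the odd columns of `A`. -/
def oddForm (A : Matrix (Ind m n) (Ind m n) B) (a : Ind m n) : GrassmannExt B n :=
  lin fun k ↦ A a (Sum.inr k)

lemma map_const_mulVec_oddForm (A S : Matrix (Ind m n) (Ind m n) B) :
    A.map const *ᵥ oddForm S = oddForm (A * S) := by
  ext a
  simp only [Matrix.mulVec, dotProduct, oddForm, lin, Matrix.mul_apply, Matrix.map_apply, map_sum,
    map_mul, Finset.mul_sum, Finset.sum_mul, mul_assoc]
  exact Finset.sum_comm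

lemma oddForm_sub (A S : Matrix (Ind m n) (Ind m n) B) :
    oddForm (A - S) = oddForm A - oddForm S := by
  ext a
  simp [oddForm, lin, sub_mul]

lemma oddForm_one_mul_lin (i : Ind m n) (c : Fin n → B) :
    oddForm (1 : Matrix (Ind m n) (Ind m n) B) i * lin c = -(lin c * oddForm 1 i) := by
  obtain i | i := i
  · simp [oddForm, lin]
  · have hi : oddForm (1 : Matrix (Ind m n) (Ind m n) B) (Sum.inr i) = oddVar i := by
      simp [oddForm, lin, Matrix.one_apply]
    rw [hi, oddVar_mul_lin]

namespace IsGlWeylSystem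

lemma const_F_mul_oddForm (h : IsGlWeylSystem F y d) (hu : ∀ b, Commute u b) (i j : Ind m n)
    (k : Fin n) :
    const (F i j) * oddForm (matrixResolvent F u) (Sum.inr k) =
      oddForm (matrixResolvent F u) (Sum.inr k) * const (F i j) -
        (if Sum.inr k = j then oddForm (matrixResolvent F u) i else 0) +
        const (matrixResolvent F u (Sum.inr k) j) * oddForm 1 i := by
  have hχ : const (matrixResolvent F u (Sum.inr k) j) * oddForm (1 : Matrix (Ind m n) _ B) i =
      lin fun l ↦ if Sum.inr l = i then matrixResolvent F u (Sum.inr k) j else 0 := by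
    simp only [oddForm, lin, Finset.mul_sum, ← mul_assoc, ← map_mul, Matrix.one_apply, mul_ite,
      mul_one, mul_zero, eq_comm (a := i)]
  have hif : (if Sum.inr k = j then oddForm (matrixResolvent F u) i else 0) =
      lin fun l ↦ if Sum.inr k = j then matrixResolvent F u i (Sum.inr l) else 0 := by
    split_ifs <;> simp [oddForm, lin]
  rw [hχ, hif]
  simp only [oddForm, lin, Finset.mul_sum, Finset.sum_mul, ← Finset.sum_sub_distrib,
    ← Finset.sum_add_distrib, mul_assoc, (commute_oddVar_const _ (F i j)).eq]
  refine Finset.sum_congr rfl fun l _ ↦ ?_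
  rw [← mul_assoc, ← mul_assoc, ← map_mul, ← map_mul, h.F_mul_matrixResolvent hu, map_add, map_sub,
    add_mul, sub_mul]

end IsGlWeylSystem

lemma map_const_mulVec_oddForm_matrixResolvent (hF : IsUnit (F - Matrix.scalar _ u)) :
    F.map const *ᵥ oddForm (matrixResolvent F u) =
      oddForm 1 + (const u : GrassmannExt B n) • oddForm (matrixResolvent F u) := by
  have hscalar : (Matrix.scalar (Ind m n) u).map const *ᵥ oddForm (matrixResolvent F u) =
      (const u : GrassmannExt B n) • oddForm (matrixResolvent F u) := by
    ext a
    simp [Matrix.scalar_apply, Matrix.diagonal_map, Matrix.mulVec_diagonal]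
  rw [← Ring.mul_inverse_cancel _ hF, sub_mul, oddForm_sub, ← matrixResolvent,
    ← map_const_mulVec_oddForm, ← map_const_mulVec_oddForm, hscalar, sub_add_cancel]

lemma eq_zero_of_map_const_mulVec_eq_smul {Q : Ind m n → GrassmannExt B n}
    (hF : IsUnit (F - Matrix.scalar _ u))
    (hQ : F.map const *ᵥ Q = (const u : GrassmannExt B n) • Q) : Q = 0 := by
  have hzero : (F - Matrix.scalar _ u).map const *ᵥ Q = 0 := by
    rw [Matrix.map_sub const (map_sub _), Matrix.sub_mulVec, hQ, sub_eq_zero]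
    ext a
    simp [Matrix.scalar_apply, Matrix.diagonal_map, Matrix.mulVec_diagonal]
  rw [← Matrix.one_mulVec Q, ← Matrix.map_one const (map_zero _) (map_one _),
    ← Ring.inverse_mul_cancel _ hF, Matrix.map_mul, ← Matrix.mulVec_mulVec, hzero,
    Matrix.mulVec_zero]

namespace IsGlWeylSystem

lemma oddForm_mul_oddForm_sub_one (h : IsGlWeylSystem F y d) (hu : ∀ b, Commute u b)
    (hF : IsUnit (F - Matrix.scalar _ u)) (hF' : IsUnit (F - Matrix.scalar _ (u - 1)))
    (a : Ind m n) (k : Fin n) :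
    oddForm (matrixResolvent F u) a * oddForm (matrixResolvent F (u - 1)) (Sum.inr k) =
      -(oddForm (matrixResolvent F u) (Sum.inr k) * oddForm (matrixResolvent F (u - 1)) a) := by
  set θ := oddForm (matrixResolvent F u)
  set θ' := oddForm (matrixResolvent F (u - 1))
  set χ := oddForm (1 : Matrix (Ind m n) (Ind m n) B)
  refine eq_neg_of_add_eq_zero_left (congrFun (eq_zero_of_map_const_mulVec_eq_smul
    (Q := fun a ↦ θ a * θ' (Sum.inr k) + θ (Sum.inr k) * θ' a) hF' ?_) a)
  ext i
  have hterm (a : Ind m n) : const (F i a) * (θ a * θ' (Sum.inr k) + θ (Sum.inr k) * θ' a) =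
      const (F i a) * θ a * θ' (Sum.inr k) + θ (Sum.inr k) * (const (F i a) * θ' a) -
        (if Sum.inr k = a then θ i * θ' a else 0) -
        const (matrixResolvent F u (Sum.inr k) a) * θ' a * χ i := by
    have hχ : χ i * θ' a = -(θ' a * χ i) := oddForm_one_mul_lin i _
    rw [mul_add, ← mul_assoc, ← mul_assoc, h.const_F_mul_oddForm hu, add_mul, sub_mul, ite_mul,
      zero_mul, mul_assoc _ (χ i), hχ, mul_neg, mul_assoc, mul_assoc, mul_assoc]
    abel
  have hθ : ∑ a, const (F i a) * θ a = χ i + const u * θ i :=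
    congrFun (map_const_mulVec_oddForm_matrixResolvent hF) i
  have hθ' : ∑ a, const (F i a) * θ' a = χ i + const (u - 1) * θ' i :=
    congrFun (map_const_mulVec_oddForm_matrixResolvent hF') i
  have hres : ∑ a, const (matrixResolvent F u (Sum.inr k) a) * θ' a =
      θ (Sum.inr k) - θ' (Sum.inr k) := by
    have := congrFun (map_const_mulVec_oddForm (matrixResolvent F u) (matrixResolvent F (u - 1)))
      (Sum.inr k)
    rwa [matrixResolvent_mul_matrixResolvent_sub_one hF hF', oddForm_sub] at this
  have hχ : χ i * θ' (Sum.inr k) = -(θ' (Sum.inr k) * χ i) := oddForm_one_mul_lin i _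
  have hcomm : θ (Sum.inr k) * const u = const u * θ (Sum.inr k) :=
    (commute_const hu _).eq.symm
  simp only [Matrix.mulVec, dotProduct, Matrix.map_apply, hterm, Finset.sum_sub_distrib,
    Finset.sum_add_distrib, ← Finset.sum_mul, ← Finset.mul_sum, hθ, hθ', hres, Finset.sum_ite_eq,
    Finset.mem_univ, if_true, Pi.smul_apply, smul_eq_mul, map_sub, map_one]
  simp only [sub_mul, one_mul, add_mul, mul_add, mul_sub, hχ, ← mul_assoc, hcomm]
  abel

end IsGlWeylSystem

end OddForm

section LinVecMul

open GrassmannExt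

variable {m n : ℕ} {B : Type*} [Ring B] {F : Matrix (Ind m n) (Ind m n) B} {y d : Ind m n → B}
  {u : B}

lemma lin_vecMul (d : Ind m n → B) (S : Matrix (Ind m n) (Ind m n) B) :
    lin (fun k ↦ (d ᵥ* S) (Sum.inr k)) = ∑ c, const (d c) * oddForm S c := by
  simp only [oddForm, lin, Matrix.vecMul, dotProduct, map_sum, map_mul, Finset.sum_mul,
    Finset.mul_sum, mul_assoc]
  exact Finset.sum_comm

namespace IsGlWeylSystem

lemma oddForm_mul_lin_vecMul_sub_one (h : IsGlWeylSystem F y d) (hu : ∀ b, Commute u b)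
    (hF : IsUnit (F - Matrix.scalar _ u)) (hF' : IsUnit (F - Matrix.scalar _ (u - 1)))
    (k : Fin n) :
    oddForm (matrixResolvent F u) (Sum.inr k) *
        lin (fun l ↦ (d ᵥ* matrixResolvent F (u - 1)) (Sum.inr l)) =
      -(lin (fun l ↦ (d ᵥ* matrixResolvent F u) (Sum.inr l)) *
        oddForm (matrixResolvent F (u - 1)) (Sum.inr k)) := by
  have hd (c : Ind m n) : Commute (const (d c)) (oddForm (matrixResolvent F u) (Sum.inr k)) :=
    commute_const_lin fun l ↦ h.commute_d_matrixResolvent hu c k l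
  simp only [lin_vecMul, Finset.mul_sum, Finset.sum_mul, ← Finset.sum_neg_distrib]
  refine Finset.sum_congr rfl fun c _ ↦ ?_
  rw [← (hd c).left_comm, mul_assoc, ← mul_neg, h.oddForm_mul_oddForm_sub_one hu hF hF' c k,
    neg_neg]

lemma lin_vecMul_mul_const_y (h : IsGlWeylSystem F y d) (hu : ∀ b, Commute u b) (a : Fin n) :
    lin (fun l ↦ (d ᵥ* matrixResolvent F u) (Sum.inr l)) * const (y (Sum.inr a)) =
      -(const (y (Sum.inr a)) * lin fun l ↦ (d ᵥ* matrixResolvent F u) (Sum.inr l)) -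
        oddForm (matrixResolvent F u) (Sum.inr a) := by
  simp only [oddForm, lin, Finset.mul_sum, Finset.sum_mul, ← Finset.sum_neg_distrib,
    ← Finset.sum_sub_distrib]
  refine Finset.sum_congr rfl fun k _ ↦ ?_
  rw [mul_assoc, (commute_oddVar_const _ _).eq, ← mul_assoc, ← mul_assoc, ← map_mul, ← map_mul,
    h.vecMul_matrixResolvent_mul_y hu, map_sub, map_neg, sub_mul, neg_mul]

lemma commute_const_y_oddForm (h : IsGlWeylSystem F y d) (hu : ∀ b, Commute u b) (a b : Fin n) :
    Commute (const (y (Sum.inr a))) (oddForm (matrixResolvent F u) (Sum.inr b)) :=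
  commute_const_lin fun k ↦ by
    simpa [pI, Commute, SemiconjBy] using (h.matrixResolvent_mul_y hu (Sum.inr b) a k).symm

end IsGlWeylSystem

end LinVecMul

/-! ### Telescoping along the odd columns -/

section OddTelescope

variable {n : ℕ} {Ω : Type*} [Ring Ω]

lemma mul_partialProd_of_exchange {θ : ℕ → Fin n → Ω} {a : ℕ → Ω} {N : ℕ}
    (h : ∀ t < N, ∀ b, a t * θ (t + 1) b = -(θ t b * a (t + 1))) (k : Fin (n + 1)) (hk : k ≤ N) :
    a 0 * Fin.partialProd (fun t : Fin n ↦ θ (t + 1) t) k =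
      (-1) ^ (k : ℕ) * (Fin.partialProd (fun t : Fin n ↦ θ t t) k * a k) := by
  induction k using Fin.induction with
  | zero => simp
  | succ k ih =>
    have hk' : (k : ℕ) < N := by simpa [Nat.succ_le_iff] using hk
    rw [Fin.partialProd_succ, Fin.partialProd_succ, ← mul_assoc, ih hk'.le, mul_assoc, mul_assoc,
      Fin.val_castSucc, h k hk', Fin.val_succ, pow_succ]
    simp only [mul_neg, mul_one, neg_mul, mul_assoc]

/-- The relations between the rows `θ t` of resolvent entries, their `d`-images `ζ t`, the odd
coordinates `y` and the row `γ` of mixed minors, which let the factors of the odd determinant be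
exchanged one at a time.  The resolvents at stage `t` have `κ`-part `(c t)⁻¹`. -/
structure IsOddTelescope (θ : ℕ → Fin n → Ω) (ζ c : ℕ → Ω) (y γ : Fin n → Ω) (δ : Ω) : Prop where
  isAlternating : IsAlternating θ (n - 1)
  θ_mul_ζ : ∀ t < n - 1, ∀ b, θ t b * ζ (t + 1) = -(ζ t * θ (t + 1) b)
  ζ_mul_y (t b) : ζ t * y b = -(y b * ζ t) - θ t b
  commute_y_θ (t a b) : Commute (y a) (θ t b)
  y_mul_y (a b) : y a * y b = -(y b * y a)
  γ_mul_y (a b) : γ b * y a = -(y a * γ b) - if a = b then δ else 0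
  commute_y_δ (a) : Commute (y a) δ
  sum_γ_mul_θ (hn : 0 < n) : ∑ b, γ b * θ 0 b = δ * ζ 0
  commute_c (t x) : Commute (c t) x
  c_succ (t) : c (t + 1) = c t + 1
  isUnit_c : ∀ t < n, IsUnit (c t)

/-- The row `θ_t − (c t)⁻¹ y ζ_t`, in which the odd rows of the dressed resolvent appear. -/
def dressedRow (θ : ℕ → Fin n → Ω) (ζ c : ℕ → Ω) (y : Fin n → Ω) (t : ℕ) (b : Fin n) : Ω :=
  θ t b - Ring.inverse (c t) * (y b * ζ t)

/-- The left factor `δ c_k − Σ_{a ≥ k} γ_a y_a` at stage `k` of the telescoping. -/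
def telescopeFactor (c : ℕ → Ω) (y γ : Fin n → Ω) (δ : Ω) (k : Fin (n + 1)) : Ω :=
  δ * c k - ∑ a with k ≤ a.castSucc, γ a * y a

namespace IsOddTelescope

variable {θ : ℕ → Fin n → Ω} {ζ c : ℕ → Ω} {y γ : Fin n → Ω} {δ : Ω}

lemma isAlternating_dressedRow (h : IsOddTelescope θ ζ c y γ δ) :
    IsAlternating (dressedRow θ ζ c y) (n - 1) := by
  intro t ht a b
  have ht1 : t + 1 < n := by lia
  set r := Ring.inverse (c t)
  set r' := Ring.inverse (c (t + 1))
  have hr : r - r' = r * r' := by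
    rw [Ring.inverse_sub_inverse (iff_of_true (h.isUnit_c t (by lia)) (h.isUnit_c _ ht1)), h.c_succ,
      add_sub_cancel_left, mul_one, ← h.c_succ]
  have expand (a b : Fin n) : dressedRow θ ζ c y t a * dressedRow θ ζ c y (t + 1) b =
      θ t a * θ (t + 1) b - (r' * (y b * (θ t a * ζ (t + 1))) - r * (y a * (θ t b * ζ (t + 1))))
        - r * r' * (y a * y b * (ζ t * ζ (t + 1)) + y a * (θ t b * ζ (t + 1))) := by
    have hyθ (x : Ω) : θ t a * (y b * x) = y b * (θ t a * x) :=
      ((h.commute_y_θ t b a).left_comm x).symm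
    have hζθ : ζ t * θ (t + 1) b = -(θ t b * ζ (t + 1)) := by rw [h.θ_mul_ζ t ht, neg_neg]
    have hζy : ζ t * (y b * ζ (t + 1)) = -(y b * (ζ t * ζ (t + 1))) - θ t b * ζ (t + 1) := by
      rw [← mul_assoc, h.ζ_mul_y, sub_mul, neg_mul, mul_assoc]
    have hr'x (x z : Ω) : x * (r' * z) = r' * (x * z) :=
      ((commute_ringInverse (h.commute_c _ x)).left_comm z).symm
    calc
      _ = θ t a * θ (t + 1) b - θ t a * (r' * (y b * ζ (t + 1))) - r * (y a * (ζ t * θ (t + 1) b)) +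
          r * (y a * (ζ t * (r' * (y b * ζ (t + 1))))) := by
        simp only [dressedRow]
        noncomm_ring
      _ = _ := by
        rw [hr'x (θ t a), hyθ, hζθ, hr'x (ζ t), hr'x (y a), hζy]
        noncomm_ring
  rw [expand, expand, ← hr, h.isAlternating t ht, h.y_mul_y a b]
  noncomm_ring

lemma telescopeFactor_succ (h : IsOddTelescope θ ζ c y γ δ) (k : Fin n) :
    telescopeFactor c y γ δ k.succ = telescopeFactor c y γ δ k.castSucc - y k * γ k := by
  have hfilter : ({a | k.castSucc ≤ a.castSucc} : Finset (Fin n)) =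
      insert k ({a | k.succ ≤ a.castSucc} : Finset (Fin n)) := by
    ext a
    simp only [Finset.mem_filter, Finset.mem_univ, true_and, Finset.mem_insert, Fin.le_def,
      Fin.val_castSucc, Fin.val_succ, Fin.ext_iff]
    lia
  rw [telescopeFactor, telescopeFactor, hfilter, Finset.sum_insert (by simp), Fin.val_succ,
    h.c_succ, h.γ_mul_y, if_pos rfl, Fin.val_castSucc]
  noncomm_ring

lemma telescopeFactor_mul_y (h : IsOddTelescope θ ζ c y γ δ) (k : Fin n) :
    telescopeFactor c y γ δ k.castSucc * y k =
      y k * (telescopeFactor c y γ δ k.castSucc - δ) := by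
  have hterm (a : Fin n) : γ a * y a * y k =
      y k * (γ a * y a) + if k = a then y k * δ else 0 := by
    rw [mul_assoc, h.y_mul_y, mul_neg, ← mul_assoc, h.γ_mul_y k a]
    split_ifs with hk
    · rw [← hk, (h.commute_y_δ k).eq]
      noncomm_ring
    · noncomm_ring
  simp only [telescopeFactor, sub_mul, Finset.sum_mul, hterm, Finset.sum_add_distrib,
    Finset.sum_ite_eq, Finset.mem_filter, Finset.mem_univ, le_refl, true_and, if_true, mul_sub,
    Finset.mul_sum, mul_assoc, (h.commute_c _ (y k)).eq, (h.commute_y_δ k).left_comm]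
  abel

/-- Exchange moves the first factor `γ θ_0` of `Σ γ_b θ_0(b) = δ ζ_0` to stage `k`; the terms with
`a < k` vanish because there a row is repeated. -/
lemma sum_γ_mul_partialProd_mul_θ [Invertible (2 : Ω)] (h : IsOddTelescope θ ζ c y γ δ)
    (k : Fin n) :
    ∑ a with k.castSucc ≤ a.castSucc,
        γ a * (Fin.partialProd (fun t ↦ θ t t) k.castSucc * θ k a) =
      δ * (Fin.partialProd (fun t ↦ θ t t) k.castSucc * ζ k) := by
  set W := Fin.partialProd (fun t : Fin n ↦ θ t t) k.castSucc
  have hk : (k.castSucc : ℕ) ≤ n - 1 := by simp; lia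
  have hθ (a : Fin n) := mul_partialProd_of_exchange (a := fun t ↦ θ t a)
    (fun t ht b ↦ h.isAlternating t ht a b) k.castSucc hk
  have hζ := mul_partialProd_of_exchange (a := ζ)
    (fun t ht b ↦ by rw [h.θ_mul_ζ t ht b, neg_neg]) k.castSucc hk
  have hvanish (a : Fin n) (ha : ¬ k.castSucc ≤ a.castSucc) : W * θ k a = 0 :=
    h.isAlternating.partialProd_mul_eq_zero k.castSucc hk a (not_le.mp ha)
  have hsum := congrArg (· * Fin.partialProd (fun t : Fin n ↦ θ (t + 1) t) k.castSucc)
    (h.sum_γ_mul_θ k.pos)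
  simp only [Finset.sum_mul, mul_assoc, hθ, hζ, mul_neg_one_pow_mul, ← Finset.mul_sum] at hsum
  refine Eq.trans ?_ ((isUnit_neg_one.pow _).mul_left_cancel hsum)
  refine Finset.sum_filter_of_ne fun a _ hne ↦ by_contra fun ha ↦ hne ?_
  rw [hvanish a ha, mul_zero]

lemma telescopeFactor_mul_partialProd_mul_ζ [Invertible (2 : Ω)]
    (h : IsOddTelescope θ ζ c y γ δ) (k : Fin n) :
    telescopeFactor c y γ δ k.castSucc * (Fin.partialProd (fun t ↦ θ t t) k.castSucc * ζ k) *
        suffixProd (fun t ↦ dressedRow θ ζ c y t t) k.succ =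
      c k * (γ k * (Fin.partialProd (fun t ↦ θ t t) k.castSucc * dressedRow θ ζ c y k k) *
        suffixProd (fun t ↦ dressedRow θ ζ c y t t) k.succ) := by
  set W := Fin.partialProd (fun t : Fin n ↦ θ t t) k.castSucc
  set Z := suffixProd (fun t ↦ dressedRow θ ζ c y t t) k.succ
  have hyW (a : Fin n) : Commute (y a) W := commute_partialProd (fun t ↦ h.commute_y_θ t a t) _
  have hΘ (a : Fin n) : γ a * (c k * (W * θ k a) - y a * (W * ζ k)) =
      c k * (γ a * (W * dressedRow θ ζ c y k a)) := by
    have hcr (x z w : Ω) : c k * (x * (z * (Ring.inverse (c k) * w))) = x * (z * w) := by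
      rw [(h.commute_c k x).left_comm, (h.commute_c k z).left_comm,
        Ring.mul_inverse_cancel_left _ _ (h.isUnit_c k k.isLt)]
    rw [dressedRow, mul_sub, mul_sub, mul_sub, mul_sub, hcr, (h.commute_c k (γ a)).left_comm,
      (hyW a).left_comm]
  have hvanish (a : Fin n) (ha : k.succ ≤ a.castSucc) : dressedRow θ ζ c y k a * Z = 0 :=
    h.isAlternating_dressedRow.mul_suffixProd_eq_zero (by lia) k.succ rfl a ha
  calc
    _ = (c k * (δ * (W * ζ k)) -
          ∑ a with k.castSucc ≤ a.castSucc, γ a * (y a * (W * ζ k))) * Z := by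
      simp only [telescopeFactor, sub_mul, Finset.sum_mul, mul_assoc, Fin.val_castSucc,
        (h.commute_c k δ).left_comm]
    _ = ∑ a with k.castSucc ≤ a.castSucc, c k * (γ a * (W * (dressedRow θ ζ c y k a * Z))) := by
      rw [← h.sum_γ_mul_partialProd_mul_θ k, Finset.mul_sum, ← Finset.sum_sub_distrib,
        Finset.sum_mul]
      refine Finset.sum_congr rfl fun a _ ↦ ?_
      rw [(h.commute_c k (γ a)).left_comm, ← mul_sub, hΘ]
      simp only [mul_assoc]
    _ = c k * (γ k * (W * (dressedRow θ ζ c y k k * Z))) := by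
      refine Finset.sum_eq_single_of_mem k (by simp) fun a ha hak ↦ ?_
      have hka : k.succ ≤ a.castSucc := by
        simp only [Finset.mem_filter, Finset.mem_univ, true_and, Fin.le_def, Fin.val_castSucc,
          Fin.val_succ] at ha ⊢
        lia
      rw [hvanish a hka, mul_zero, mul_zero, mul_zero]
    _ = _ := by simp only [mul_assoc]

lemma telescopeFactor_mul_y_mul_partialProd_mul_ζ [Invertible (2 : Ω)]
    (h : IsOddTelescope θ ζ c y γ δ) (k : Fin n) :
    Ring.inverse (c k) * (telescopeFactor c y γ δ k.castSucc *
        (y k * (Fin.partialProd (fun t ↦ θ t t) k.castSucc * ζ k))) *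
        suffixProd (fun t ↦ dressedRow θ ζ c y t t) k.succ =
      y k * γ k * (Fin.partialProd (fun t ↦ θ t t) k.castSucc * θ k k) *
        suffixProd (fun t ↦ dressedRow θ ζ c y t t) k.succ := by
  have hζ := h.telescopeFactor_mul_partialProd_mul_ζ k
  set W := Fin.partialProd (fun t : Fin n ↦ θ t t) k.castSucc
  set Z := suffixProd (fun t ↦ dressedRow θ ζ c y t t) k.succ
  set r := Ring.inverse (c k)
  have hr (x : Ω) : Commute r x := commute_ringInverse (h.commute_c k x)
  have hyW : Commute (y k) W := commute_partialProd (fun t ↦ h.commute_y_θ t k t) _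
  have hyγy : y k * γ k * y k = -(y k * δ) := by
    have hyy : y k * y k = 0 := eq_zero_of_eq_neg (h.y_mul_y k k)
    rw [mul_assoc, h.γ_mul_y, if_pos rfl, mul_sub, mul_neg, ← mul_assoc, hyy, zero_mul, neg_zero,
      zero_sub]
  calc
    _ = r * (y k * (telescopeFactor c y γ δ k.castSucc * (W * ζ k) * Z)) -
          r * (y k * δ * (W * ζ k)) * Z := by
      rw [← mul_assoc (telescopeFactor c y γ δ _), h.telescopeFactor_mul_y]
      noncomm_ring
    _ = y k * γ k * (W * dressedRow θ ζ c y k k) * Z - r * (y k * δ * (W * ζ k)) * Z := by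
      rw [hζ, ← (h.commute_c k (y k)).left_comm,
        Ring.inverse_mul_cancel_left _ _ (h.isUnit_c k k.isLt)]
      noncomm_ring
    _ = y k * γ k * (W * θ k k) * Z - r * (y k * γ k * y k * (W * ζ k)) * Z
          - r * (y k * δ * (W * ζ k)) * Z := by
      rw [dressedRow, mul_sub, (hr W).symm.left_comm, hyW.symm.left_comm, mul_sub,
        (hr (y k * γ k)).symm.left_comm]
      noncomm_ring
    _ = _ := by
      rw [hyγy]
      noncomm_ring

lemma telescope_step [Invertible (2 : Ω)] (h : IsOddTelescope θ ζ c y γ δ) (k : Fin n) :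
    telescopeFactor c y γ δ k.castSucc * Fin.partialProd (fun t ↦ θ t t) k.castSucc *
        suffixProd (fun t ↦ dressedRow θ ζ c y t t) k.castSucc =
      telescopeFactor c y γ δ k.succ * Fin.partialProd (fun t ↦ θ t t) k.succ *
        suffixProd (fun t ↦ dressedRow θ ζ c y t t) k.succ := by
  have hyζ := h.telescopeFactor_mul_y_mul_partialProd_mul_ζ k
  rw [suffixProd_castSucc, Fin.partialProd_succ, h.telescopeFactor_succ]
  set W := Fin.partialProd (fun t : Fin n ↦ θ t t) k.castSucc
  set Z := suffixProd (fun t ↦ dressedRow θ ζ c y t t) k.succ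
  set A := telescopeFactor c y γ δ k.castSucc
  set r := Ring.inverse (c k)
  have hr (x : Ω) : Commute r x := commute_ringInverse (h.commute_c k x)
  have hyW : Commute (y k) W := commute_partialProd (fun t ↦ h.commute_y_θ t k t) _
  calc
    _ = A * (W * θ k k) * Z - A * (W * (r * (y k * ζ k))) * Z := by
      rw [dressedRow]
      noncomm_ring
    _ = A * (W * θ k k) * Z - r * (A * (y k * (W * ζ k))) * Z := by
      rw [(hr W).symm.left_comm, (hr A).symm.left_comm, hyW.symm.left_comm]
    _ = _ := by
      rw [hyζ]
      noncomm_ring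

theorem telescopeFactor_mul_prod [Invertible (2 : Ω)] (h : IsOddTelescope θ ζ c y γ δ) :
    (δ * c 0 - ∑ a, γ a * y a) * (List.ofFn fun t : Fin n ↦ dressedRow θ ζ c y t t).prod =
      δ * c n * (List.ofFn fun t : Fin n ↦ θ t t).prod := by
  have hstep (k : Fin (n + 1)) :
      telescopeFactor c y γ δ 0 * (List.ofFn fun t : Fin n ↦ dressedRow θ ζ c y t t).prod =
        telescopeFactor c y γ δ k * Fin.partialProd (fun t ↦ θ t t) k *
          suffixProd (fun t ↦ dressedRow θ ζ c y t t) k := by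
    induction k using Fin.induction with
    | zero => rw [Fin.partialProd_zero, mul_one, suffixProd_zero]
    | succ k ih => rw [ih, h.telescope_step]
  have hlast := hstep (Fin.last n)
  rw [partialProd_last, suffixProd_last, mul_one] at hlast
  simpa [telescopeFactor] using hlast

end IsOddTelescope

end OddTelescope

/-! ### Comparison of the Capelli Berezinians -/

section CapelliBerezinian

open GrassmannExt

variable {m n : ℕ} {B : Type*} [Ring B]

/-- The column determinant of the odd-odd entries of the resolvents `(A − w + t)⁻¹`, `t < n`: the
second factor of the Capelli Berezinian. -/
def resolventDet (A : Matrix (Ind m n) (Ind m n) B) (w : B) : B :=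
  orderedDet (Matrix.of fun t j : Fin n ↦
    matrixResolvent A (w - (t : ℕ)) (Sum.inr t) (Sum.inr j))

lemma berezin_prod_oddForm (A : Matrix (Ind m n) (Ind m n) B) (w : B) :
    berezin (List.ofFn fun t : Fin n ↦
      oddForm (matrixResolvent A (w - (t : ℕ))) (Sum.inr t)).prod = resolventDet A w :=
  berezin_prod_lin _

variable {F : Matrix (Ind m n) (Ind m n) B} {y d : Ind m n → B} {κ u v w : B}

lemma oddForm_matrixResolvent_phiMatrix (hκ : ∀ b, Commute κ b) (hu : ∀ b, Commute u b)
    (h : IsUnit (phiMatrix F y d κ - Matrix.scalar _ u)) (b : Fin n) :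
    oddForm (matrixResolvent (phiMatrix F y d κ) u) (Sum.inr b) =
      oddForm (matrixResolvent F u) (Sum.inr b) - Ring.inverse (const (κ - u)) *
        (const (y (Sum.inr b)) * lin fun l ↦ (d ᵥ* matrixResolvent F u) (Sum.inr l)) := by
  have hc := (isUnit_of_isUnit_phiMatrix hκ hu h).1
  have hcomm : Commute (Ring.inverse (κ - u)) (y (Sum.inr b)) :=
    commute_ringInverse ((hκ _).sub_left (hu _))
  have hentry (k : Fin n) : matrixResolvent (phiMatrix F y d κ) u (Sum.inr b) (Sum.inr k) = _ :=
    matrixResolvent_phiMatrix_emb_emb hκ hu h (Sum.inr b) (Sum.inr k)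
  rw [← map_ringInverse const hc, (hcomm.map const).left_comm]
  simp only [oddForm, lin, hentry, map_sub, map_mul, sub_mul, Finset.sum_sub_distrib,
    Finset.mul_sum, mul_assoc]

namespace IsGlWeylSystem

lemma isOddTelescope [Invertible (2 : B)] (h : IsGlWeylSystem F y d) (hκ : ∀ b, Commute κ b)
    (hv : ∀ b, Commute v b) (hN : IsGlMatrix (phiMatrix F y d κ).toBlocks₁₁)
    (hc : ∀ t < n, IsUnit (κ - (v + m - t)))
    (hF : ∀ t < n, IsUnit (F - Matrix.scalar _ (v + m - (t : ℕ)))) :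
    IsOddTelescope (n := n) (fun t b ↦ oddForm (matrixResolvent F (v + m - (t : ℕ))) (Sum.inr b))
      (fun t ↦ lin fun l ↦ (d ᵥ* matrixResolvent F (v + m - (t : ℕ))) (Sum.inr l))
      (fun t ↦ const (κ - (v + m - (t : ℕ)))) (fun b ↦ const (y (Sum.inr b)))
      (fun b ↦ const (mixedRow F y d κ v b)) (const (capelliDet F.toBlocks₁₁ (v + 1))) := by
  have hu (t : ℕ) (b : B) : Commute (v + m - (t : B)) b :=
    ((hv b).add_left (Nat.cast_commute m b)).sub_left (Nat.cast_commute t b)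
  have hsucc (t : ℕ) : v + m - ((t + 1 : ℕ) : B) = v + m - (t : B) - 1 := by push_cast; abel
  have hF' (t : ℕ) (ht : t < n - 1) := hsucc t ▸ hF (t + 1) (by lia)
  refine ⟨fun t ht a b ↦ ?_, fun t ht b ↦ ?_, fun t b ↦ h.lin_vecMul_mul_const_y (hu t) b,
    fun t a b ↦ h.commute_const_y_oddForm (hu t) a b, fun a b ↦ ?_, fun a b ↦ ?_,
    fun a ↦ (h.commute_y_capelliDet hv a).map const, fun hn ↦ ?_,
    fun t x ↦ commute_const (fun b ↦ (hκ b).sub_left (hu t b)) x, fun t ↦ ?_,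
    fun t ht ↦ (hc t ht).map const⟩
  · rw [hsucc]
    exact h.oddForm_mul_oddForm_sub_one (hu t) (hF t (by lia)) (hF' t ht) (Sum.inr a) b
  · rw [hsucc]
    exact h.oddForm_mul_lin_vecMul_sub_one (hu t) (hF t (by lia)) (hF' t ht) b
  · rw [← map_mul, h.y_mul_y, ← map_mul, ← map_neg]
    simp [pI]
  · rw [← map_mul, h.mixedRow_mul_y hv, map_sub, map_neg, map_mul, apply_ite const, map_zero]
  · have h0 := hF 0 hn
    simp only [Nat.cast_zero, sub_zero] at h0 ⊢
    simp only [oddForm, lin, Finset.mul_sum, ← mul_assoc, ← map_mul]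
    rw [Finset.sum_comm]
    simp only [← Finset.sum_mul, ← map_sum, h.sum_mixedRow_mul_matrixResolvent hv hN h0]
  · rw [hsucc, ← sub_add, map_add, map_one]

theorem capelliDet_mul_resolventDet_phiMatrix [Invertible (2 : B)] (h : IsGlWeylSystem F y d)
    (hκ : ∀ b, Commute κ b) (hv : ∀ b, Commute v b)
    (hN : IsGlMatrix (phiMatrix F y d κ).toBlocks₁₁)
    (hunit : ∀ t < n, IsUnit (phiMatrix F y d κ - Matrix.scalar _ (v + m - (t : ℕ)))) :
    capelliDet (phiMatrix F y d κ).toBlocks₁₁ v * resolventDet (phiMatrix F y d κ) (v + m) =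
      (κ - (v + m - n)) * (capelliDet F.toBlocks₁₁ (v + 1) * resolventDet F (v + m)) := by
  have hu (t : ℕ) (b : B) : Commute (v + m - (t : B)) b :=
    ((hv b).add_left (Nat.cast_commute m b)).sub_left (Nat.cast_commute t b)
  have hcF (t : ℕ) (ht : t < n) := isUnit_of_isUnit_phiMatrix hκ (hu t) (hunit t ht)
  have htel := (h.isOddTelescope hκ hv hN (fun t ht ↦ (hcF t ht).1)
    fun t ht ↦ (hcF t ht).2).telescopeFactor_mul_prod
  have hrow (t : Fin n) :=
    oddForm_matrixResolvent_phiMatrix hκ (hu t) (hunit t t.isLt) t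
  have hN₁₁ := h.capelliDet_add_sum_mixedRow_mul hv hN
  simp only [dressedRow, ← hrow, ← map_mul, ← map_sum, ← map_sub, Nat.cast_zero, sub_zero,
    ← eq_sub_of_add_eq hN₁₁] at htel
  have hber := congrArg berezin htel
  rwa [berezin_const_mul, berezin_const_mul, berezin_prod_oddForm, berezin_prod_oddForm,
    ((hκ _).sub_left (hu n _)).symm.eq, mul_assoc] at hber

end IsGlWeylSystem

end CapelliBerezinian

/-! ### Matrices over Laurent series -/

section LaurentSeries

variable {A ι : Type} [Ring A] [Fintype ι] [DecidableEq ι]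

lemma commute_hahnSeries_C {r : A} (h : ∀ a, Commute r a) (x : TSer A) :
    Commute (HahnSeries.C r) x := by
  ext k
  rw [HahnSeries.C_apply, HahnSeries.coeff_mul_single_zero, HahnSeries.coeff_single_zero_mul, h]

lemma commute_Tv (x : TSer A) : Commute Tv x := by
  ext k
  rw [Tv, HahnSeries.coeff_mul_single, HahnSeries.coeff_single_mul, one_mul, mul_one]

lemma isUnit_Tv : IsUnit (Tv : TSer A) :=
  ⟨⟨Tv, HahnSeries.single 1 1, by simp [Tv], by simp [Tv]⟩, rfl⟩

/-- The geometric series `Σ_k z^k X^k`, entrywise. -/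
def geomMatrix (X : Matrix ι ι A) : Matrix ι ι (PowerSeries A) :=
  Matrix.of fun i j ↦ PowerSeries.mk fun k ↦ (X ^ k) i j

lemma geomMatrix_eq_one_add (X : Matrix ι ι A) :
    geomMatrix X = 1 + Matrix.scalar ι PowerSeries.X * (X.map PowerSeries.C * geomMatrix X) := by
  ext i j (- | k)
  · by_cases h : i = j <;> simp [geomMatrix, h]
  · rw [Matrix.add_apply, Matrix.scalar_apply, Matrix.diagonal_mul, map_add,
      PowerSeries.coeff_succ_X_mul]
    by_cases h : i = j <;>
      simp [geomMatrix, h, pow_succ', Matrix.mul_apply, Matrix.one_apply,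
        PowerSeries.coeff_one]

lemma geomMatrix_eq_one_add' (X : Matrix ι ι A) :
    geomMatrix X = 1 + Matrix.scalar ι PowerSeries.X * (geomMatrix X * X.map PowerSeries.C) := by
  ext i j (- | k)
  · by_cases h : i = j <;> simp [geomMatrix, h]
  · rw [Matrix.add_apply, Matrix.scalar_apply, Matrix.diagonal_mul, map_add,
      PowerSeries.coeff_succ_X_mul]
    by_cases h : i = j <;>
      simp [geomMatrix, h, pow_succ, Matrix.mul_apply, Matrix.one_apply,
        PowerSeries.coeff_one]

lemma commute_scalar_X (M : Matrix ι ι (PowerSeries A)) :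
    Commute (Matrix.scalar ι PowerSeries.X) M :=
  Matrix.scalar_commute _ (fun f ↦ (PowerSeries.commute_X f).symm) M

lemma isUnit_one_sub_scalar_X_mul (X : Matrix ι ι A) :
    IsUnit (1 - Matrix.scalar ι PowerSeries.X * X.map PowerSeries.C) := by
  refine ⟨⟨_, geomMatrix X, ?_, ?_⟩, rfl⟩
  · rw [sub_mul, one_mul, mul_assoc, sub_eq_iff_eq_add]
    exact geomMatrix_eq_one_add X
  · rw [mul_sub, mul_one, ← mul_assoc, ← (commute_scalar_X _).eq, mul_assoc, sub_eq_iff_eq_add]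
    exact geomMatrix_eq_one_add' X

lemma isUnit_map_C_sub_scalar_Tv (X : Matrix ι ι A) :
    IsUnit (X.map HahnSeries.C - Matrix.scalar ι Tv) := by
  have hgeom := (isUnit_one_sub_scalar_X_mul X).map (HahnSeries.ofPowerSeries ℤ A).mapMatrix
  have hfactor : X.map HahnSeries.C - Matrix.scalar ι Tv = -(Matrix.scalar ι Tv *
      (HahnSeries.ofPowerSeries ℤ A).mapMatrix
        (1 - Matrix.scalar ι PowerSeries.X * X.map PowerSeries.C)) := by
    ext1 i j
    by_cases h : i = j <;>
      simp [h, mul_sub, Tv, HahnSeries.ofPowerSeries_C, HahnSeries.ofPowerSeries_X]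
  rw [hfactor]
  exact ((isUnit_Tv.map (Matrix.scalar ι)).mul hgeom).neg

lemma isUnit_map_C_sub_scalar (X : Matrix ι ι A) (c : A) :
    IsUnit (X.map HahnSeries.C - Matrix.scalar ι (Tv + HahnSeries.C c)) := by
  convert isUnit_map_C_sub_scalar_Tv (X - Matrix.scalar ι c) using 1
  ext1 i j
  by_cases h : i = j <;> simp [h, sub_add_eq_sub_sub_swap]

end LaurentSeries

/-! ### The Capelli Berezinian -/

section Shift

variable {B : Type*} [Ring B]

lemma capelliDet_add_scalar {k : ℕ} (M : Matrix (Fin k) (Fin k) B) (v r : B) :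
    capelliDet (M + Matrix.scalar _ r) (v + r) = capelliDet M v := by
  have h : M + Matrix.scalar _ r - Matrix.diagonal (fun t : Fin k ↦ v + r + (t : ℕ)) =
      M - Matrix.diagonal fun t : Fin k ↦ v + (t : ℕ) := by
    ext i j
    by_cases h : i = j <;> simp [h]
    abel
  rw [capelliDet, h, capelliDet]

lemma matrixResolvent_add_scalar {ι : Type*} [Fintype ι] [DecidableEq ι] (A : Matrix ι ι B)
    (u r : B) : matrixResolvent (A + Matrix.scalar _ r) (u + r) = matrixResolvent A u := by
  rw [matrixResolvent, map_add, add_sub_add_right_eq_sub, matrixResolvent]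

lemma resolventDet_add_scalar {m n : ℕ} (A : Matrix (Ind m n) (Ind m n) B) (w r : B) :
    resolventDet (A + Matrix.scalar _ r) (w + r) = resolventDet A w := by
  simp only [resolventDet, add_sub_right_comm w r, matrixResolvent_add_scalar]

lemma resolventDet_eq_zero_of_not_isUnit {m n : ℕ} {A : Matrix (Ind m n) (Ind m n) B} {w : B}
    {t : ℕ} (ht : t < n) (h : ¬IsUnit (A - Matrix.scalar _ (w - t))) : resolventDet A w = 0 :=
  orderedDet_eq_zero_of_row_eq_zero ⟨t, ht⟩ fun j ↦ by
    rw [Matrix.of_apply, matrixResolvent, Ring.inverse_non_unit _ h, Matrix.zero_apply]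

end Shift

section Capelli

variable {m n : ℕ} {A : Type} [Ring A] [Algebra ℂ A]

lemma capelli_eq_mul (E : Matrix (Ind m n) (Ind m n) (TSer A)) (v : TSer A) :
    capelli E v = capelliDet E.toBlocks₁₁ v * resolventDet E (v + m - 1) := by
  have hcast (t : ℕ) : (t : ℂ) • (1 : TSer A) = t := by
    rw [Algebra.smul_def, mul_one, map_natCast]
  have hshift (t : ℕ) : v + ((m : ℂ) - t - 1) • (1 : TSer A) = v + m - 1 - t := by
    rw [sub_smul, sub_smul, one_smul, hcast, hcast]
    abel
  have hdiag (s t : Fin m) : (if s = t then v + (t : ℕ) else 0) =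
      Matrix.diagonal (fun t : Fin m ↦ v + (t : ℕ)) s t := by
    obtain rfl | h := eq_or_ne s t <;> simp [*]
  simp only [capelli, hcast, hshift, hdiag, Matrix.smul_one_eq_diagonal]
  rfl

lemma capelli_add_scalar (E : Matrix (Ind m n) (Ind m n) (TSer A)) (v r : TSer A) :
    capelli (E + Matrix.scalar _ r) (v + r) = capelli E v := by
  have hblock : (E + Matrix.scalar _ r).toBlocks₁₁ = E.toBlocks₁₁ + Matrix.scalar _ r := by
    ext1 i j
    simp [Matrix.diagonal_apply, Matrix.toBlocks₁₁]
  have hshift : v + r + m - 1 = v + m - 1 + r := by abel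
  rw [capelli_eq_mul, capelli_eq_mul, hblock, hshift, capelliDet_add_scalar,
    resolventDet_add_scalar]

end Capelli

section Map

lemma matrix_ext_z0_emb {m n : ℕ} {B : Type*} {M N : Matrix (Ind (m + 1) n) (Ind (m + 1) n) B}
    (h00 : M z0 z0 = N z0 z0) (h0 : ∀ b, M z0 (emb b) = N z0 (emb b))
    (h1 : ∀ a, M (emb a) z0 = N (emb a) z0) (h : ∀ a b, M (emb a) (emb b) = N (emb a) (emb b)) :
    M = N := by
  ext i j
  obtain ⟨- | i, rfl⟩ := indSuccEquiv.surjective i <;>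
    obtain ⟨- | j, rfl⟩ := indSuccEquiv.surjective j
  exacts [h00, h0 j, h1 i, h i j]

variable {m n : ℕ} {A B : Type*} [Ring A] [Ring B] {F : Matrix (Ind m n) (Ind m n) A}
  {y d : Ind m n → A}

lemma IsGlWeylSystem.map (h : IsGlWeylSystem F y d) (f : A →+* B) :
    IsGlWeylSystem (F.map f) (f ∘ y) (f ∘ d) where
  F_mul_F i j k l := by
    have := congrArg f (h.F_mul_F i j k l)
    simpa only [map_sub, map_mul, map_pow, map_neg, map_one, apply_ite f, map_zero,
      Matrix.map_apply, Function.comp_apply] using this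
  F_mul_y i j a := by
    have := congrArg f (h.F_mul_y i j a)
    simpa only [map_mul, map_pow, map_neg, map_one,
      Matrix.map_apply, Function.comp_apply] using this
  F_mul_d i j a := by
    have := congrArg f (h.F_mul_d i j a)
    simpa only [map_mul, map_pow, map_neg, map_one,
      Matrix.map_apply, Function.comp_apply] using this
  y_mul_y a b := by
    have := congrArg f (h.y_mul_y a b)
    simpa only [map_mul, map_pow, map_neg, map_one,
      Matrix.map_apply, Function.comp_apply] using this
  d_mul_y a b := by
    have := congrArg f (h.d_mul_y a b)
    simpa only [map_add, map_mul, map_pow, map_neg, map_one, apply_ite f, map_zero,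
      Matrix.map_apply, Function.comp_apply] using this

lemma IsGlMatrix.map {k : ℕ} {M : Matrix (Fin k) (Fin k) A} (h : IsGlMatrix M) (f : A →+* B) :
    IsGlMatrix (M.map f) := fun a i b j ↦ by
  have := congrArg f (h a i b j)
  simpa only [map_sub, map_mul, apply_ite f, map_zero,
      Matrix.map_apply, Function.comp_apply] using this

lemma IsGlMatrix.sub_scalar {k : ℕ} {M : Matrix (Fin k) (Fin k) A} (h : IsGlMatrix M) {r : A}
    (hr : ∀ a, Commute r a) : IsGlMatrix (M - Matrix.scalar _ r) := fun a i b j ↦ by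
  have hdiag (s t : Fin k) (x : A) : Commute (Matrix.diagonal (fun _ ↦ r) s t) x := by
    rw [Matrix.diagonal_apply]
    split_ifs
    exacts [hr x, Commute.zero_left x]
  have hcomm : (M a i - Matrix.diagonal (fun _ ↦ r) a i) *
        (M b j - Matrix.diagonal (fun _ ↦ r) b j) -
      (M b j - Matrix.diagonal (fun _ ↦ r) b j) * (M a i - Matrix.diagonal (fun _ ↦ r) a i) =
      M a i * M b j - M b j * M a i := by
    simp only [sub_mul, mul_sub]
    rw [(hdiag a i (M b j)).eq, (hdiag b j (M a i)).eq, (hdiag a i (Matrix.diagonal _ b j)).eq]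
    abel
  simp only [Matrix.scalar_apply, Matrix.sub_apply]
  rw [hcomm, h]
  by_cases hib : i = b <;> by_cases hja : j = a <;> simp [hib, hja, Ne.symm]

lemma phiMatrix_map (f : A →+* B) (κ : A) :
    (phiMatrix F y d κ).map f = phiMatrix (F.map f) (f ∘ y) (f ∘ d) (f κ) := by
  refine matrix_ext_z0_emb ?_ (fun b ↦ ?_) (fun a ↦ ?_) fun a b ↦ ?_ <;>
    simp [phiMatrix_z0_z0, phiMatrix_z0_emb, phiMatrix_emb_z0, phiMatrix_emb_emb, dotProduct,
      Matrix.mulVec]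

end Map

section CapelliPhiMatrix

variable {m n : ℕ} {A : Type} [Ring A] [Algebra ℂ A]

theorem IsGlWeylSystem.capelli_phiMatrix {F : Matrix (Ind m n) (Ind m n) A} {y d : Ind m n → A}
    {κ : A} {v : TSer A} (h : IsGlWeylSystem F y d) (hκ : ∀ a, Commute κ a)
    (hv : ∀ x, Commute v x) (hN : IsGlMatrix (phiMatrix F y d κ).toBlocks₁₁)
    (hunit : ∀ t < n, IsUnit ((phiMatrix F y d κ).map HahnSeries.C -
      Matrix.scalar _ (v + m - (t : ℕ)))) :
    capelli ((phiMatrix F y d κ).map HahnSeries.C) v =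
      ((HahnSeries.C κ : TSer A) - (v + m - n)) * capelli (F.map HahnSeries.C) (v + 1) := by
  have : Invertible (2 : TSer A) :=
    (invertibleOfNonzero (two_ne_zero' ℂ)).map (algebraMap ℂ (TSer A)) |>.copy _
      (map_ofNat _ 2).symm
  have hm : v + (m + 1 : ℕ) - 1 = v + m := by push_cast; abel
  have hm' : v + 1 + m - 1 = v + m := by abel
  have hN' : IsGlMatrix ((phiMatrix F y d κ).map (HahnSeries.C : A →+* TSer A)).toBlocks₁₁ :=
    (hN.map (HahnSeries.C : A →+* TSer A) :)
  rw [capelli_eq_mul, capelli_eq_mul, hm, hm']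
  rw [phiMatrix_map] at hN' hunit ⊢
  exact (h.map (HahnSeries.C : A →+* TSer A)).capelliDet_mul_resolventDet_phiMatrix
    (commute_hahnSeries_C hκ) hv hN' hunit

lemma capelli_eq_zero_of_not_isUnit {E : Matrix (Ind (m + 1) n) (Ind (m + 1) n) (TSer A)}
    {v : TSer A} {t : ℕ} (ht : t < n) (h : ¬IsUnit (E - Matrix.scalar _ (v + m - t))) :
    capelli E v = 0 := by
  have hm : v + (m + 1 : ℕ) - 1 = v + m := by push_cast; abel
  rw [capelli_eq_mul, hm, resolventDet_eq_zero_of_not_isUnit ht h, mul_zero]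

end CapelliPhiMatrix

/-! ### The operators `t_i/t_0` and `t_0 ∂_i` -/

section Operators

variable {m n : ℕ}

lemma mkOp_fmono {M : Type} [AddCommGroup M] [Module ℂ M] (g : FMon m n → M) (x : FMon m n) :
    mkOp g (fmono x) = g x := by
  simp [mkOp, fmono]

lemma end_ext_fmono {f g : Module.End ℂ (FSp m n)} (h : ∀ x, f (fmono x) = g (fmono x)) : f = g :=
  Finsupp.lhom_ext' fun x ↦ LinearMap.ext_ring (h x)

lemma opDivE_fmono (i : Fin m) (x : FMon m n) : opDivE i (fmono x) =
    fmono (x.1 - 1, Function.update x.2.1 i (x.2.1 i + 1), x.2.2) :=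
  mkOp_fmono _ _

lemma opDivO_fmono (i : Fin n) (x : FMon m n) : opDivO i (fmono x) = if x.2.2 i then 0 else
    ((-1 : ℂ) ^ cntB x.2.2 i) • fmono (x.1 - 1, x.2.1, Function.update x.2.2 i true) :=
  mkOp_fmono _ _

lemma opPar0_fmono (x : FMon m n) : opPar0 (fmono x) = (x.1 : ℂ) • fmono x :=
  mkOp_fmono _ _

lemma opParE_fmono (i : Fin m) (x : FMon m n) : opParE i (fmono x) =
    (x.2.1 i : ℂ) • fmono (x.1 + 1, Function.update x.2.1 i (x.2.1 i - 1), x.2.2) :=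
  mkOp_fmono _ _

lemma opParO_fmono (i : Fin n) (x : FMon m n) : opParO i (fmono x) = if x.2.2 i then
    ((-1 : ℂ) ^ cntB x.2.2 i) • fmono (x.1 + 1, x.2.1, Function.update x.2.2 i false) else 0 :=
  mkOp_fmono _ _

lemma neg_one_pow_cntB (b : Fin n → Bool) (j : Fin n) :
    (-1 : ℂ) ^ cntB b j = ∏ k, if k < j ∧ b k = true then -1 else 1 := by
  simp [cntB, Finset.prod_ite]

lemma neg_one_pow_cntB_update {b : Fin n → Bool} {i : Fin n} {v : Bool} (h : b i ≠ v)
    (j : Fin n) : (-1 : ℂ) ^ cntB (Function.update b i v) j =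
      (if i < j then -1 else 1) * (-1) ^ cntB b j := by
  have hsign : (if i < j then (-1 : ℂ) else 1) =
      ∏ k, if k = i then if k < j then -1 else 1 else 1 := by
    simp
  rw [neg_one_pow_cntB, neg_one_pow_cntB, hsign, ← Finset.prod_mul_distrib]
  refine Finset.prod_congr rfl fun k _ ↦ ?_
  obtain rfl | hk := eq_or_ne k i
  · cases hb : b k <;> cases v <;> simp_all
  · simp [hk]

lemma ite_lt_neg_one {i j : Fin n} (h : i ≠ j) :
    (if i < j then (-1 : ℂ) else 1) = -if j < i then -1 else 1 := by
  obtain h | h := lt_or_gt_of_ne h <;> simp [h, h.not_gt]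

lemma commute_opDivE_opDivE (i j : Fin m) : Commute (opDivE (n := n) i) (opDivE j) := by
  refine end_ext_fmono fun x ↦ ?_
  obtain rfl | h := eq_or_ne i j
  · rfl
  · simp [opDivE_fmono, h, h.symm, Function.update_comm h]

lemma commute_opDivE_opDivO (i : Fin m) (j : Fin n) : Commute (opDivE i) (opDivO j) := by
  refine end_ext_fmono fun x ↦ ?_
  cases hx : x.2.2 j <;> simp [opDivE_fmono, opDivO_fmono, hx]

lemma opDivO_mul_opDivO (i j : Fin n) :
    opDivO (m := m) i * opDivO j = -(opDivO j * opDivO i) := by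
  refine end_ext_fmono fun ⟨k, e, c⟩ ↦ ?_
  simp only [LinearMap.neg_apply, Module.End.mul_apply, opDivO_fmono]
  obtain rfl | h := eq_or_ne i j
  · cases hc : c i <;> simp [opDivO_fmono]
  · cases hi : c i <;> cases hj : c j <;>
      simp only [hi, hj, opDivO_fmono, h, h.symm, Function.update_of_ne, ne_eq, not_false_eq_true,
        map_smul, map_zero, neg_zero, if_true, Bool.false_eq_true, if_false, smul_zero]
    rw [neg_one_pow_cntB_update (by simp [hj]), neg_one_pow_cntB_update (by simp [hi]),
      Function.update_comm h, smul_smul, smul_smul, ← neg_smul, ite_lt_neg_one h]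
    ring_nf

lemma opParE_mul_opDivE (i j : Fin m) : opParE (n := n) j * opDivE i =
    opDivE i * opParE j + if i = j then 1 else 0 := by
  refine end_ext_fmono fun ⟨k, e, c⟩ ↦ ?_
  obtain rfl | h := eq_or_ne i j
  · cases hi : e i with
    | zero =>
      have hupd : Function.update e i 0 = e := by rw [← hi, Function.update_eq_self]
      simp [opDivE_fmono, opParE_fmono, hi, hupd]
    | succ r =>
      have hupd : Function.update e i (r + 1) = e := by rw [← hi, Function.update_eq_self]
      simp [opDivE_fmono, opParE_fmono, hi, hupd, add_smul]
  · simp [opDivE_fmono, opParE_fmono, h, h.symm, Function.update_comm h]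

lemma commute_opParE_opDivO (i : Fin m) (j : Fin n) : Commute (opParE i) (opDivO j) := by
  refine end_ext_fmono fun x ↦ ?_
  cases hx : x.2.2 j <;> simp [opParE_fmono, opDivO_fmono, hx, smul_smul, mul_comm]

lemma commute_opParO_opDivE (i : Fin m) (j : Fin n) : Commute (opParO j) (opDivE i) := by
  refine end_ext_fmono fun x ↦ ?_
  cases hx : x.2.2 j <;> simp [opDivE_fmono, opParO_fmono, hx]

lemma opParO_opDivO_fmono (i : Fin n) (x : FMon m n) :
    opParO i (opDivO i (fmono x)) = if x.2.2 i then 0 else fmono x := by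
  cases hx : x.2.2 i
  · have hupd : Function.update x.2.2 i false = x.2.2 := by rw [← hx, Function.update_eq_self]
    simp [opDivO_fmono, opParO_fmono, hx, hupd, smul_smul, ← mul_pow,
      neg_one_pow_cntB_update (i := i) (v := true) (hx.trans_ne Bool.false_ne_true)]
  · simp [opDivO_fmono, hx]

lemma opDivO_opParO_fmono (i : Fin n) (x : FMon m n) :
    opDivO i (opParO i (fmono x)) = if x.2.2 i then fmono x else 0 := by
  cases hx : x.2.2 i
  · simp [opParO_fmono, hx]
  · have hupd : Function.update x.2.2 i true = x.2.2 := by rw [← hx, Function.update_eq_self]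
    simp [opDivO_fmono, opParO_fmono, hx, hupd, smul_smul, ← mul_pow,
      neg_one_pow_cntB_update (i := i) (v := false) (hx.trans_ne Bool.false_ne_true.symm)]

lemma opParO_mul_opDivO (i j : Fin n) : opParO (m := m) j * opDivO i =
    -(opDivO i * opParO j) + if i = j then 1 else 0 := by
  refine end_ext_fmono fun ⟨k, e, c⟩ ↦ ?_
  obtain rfl | h := eq_or_ne i j
  · simp only [LinearMap.add_apply, LinearMap.neg_apply, Module.End.mul_apply, opParO_opDivO_fmono,
      opDivO_opParO_fmono]
    by_cases hc : c i <;> simp [hc]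
  simp only [LinearMap.neg_apply, Module.End.mul_apply, opDivO_fmono, opParO_fmono, h, if_false,
    add_zero]
  cases hi : c i <;> cases hj : c j <;>
    simp only [hi, hj, opDivO_fmono, opParO_fmono, h, h.symm, Function.update_of_ne, ne_eq,
      not_false_eq_true, map_smul, map_zero, neg_zero, if_true, Bool.false_eq_true, if_false,
      smul_zero]
  rw [neg_one_pow_cntB_update (by simp [hi]), neg_one_pow_cntB_update (by simp [hj]),
    Function.update_comm h, smul_smul, smul_smul, ← neg_smul, ite_lt_neg_one h]
  ring_nf

lemma opDiv_mul_opDiv (a b : Ind m n) :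
    opDiv a * opDiv b = ((-1 : ℂ) ^ (pI a * pI b)) • (opDiv b * opDiv a) := by
  rcases a with i | i <;> rcases b with j | j
  · simpa [pI, opDiv] using (commute_opDivE_opDivE i j).eq
  · simpa [pI, opDiv] using (commute_opDivE_opDivO i j).eq
  · simpa [pI, opDiv] using (commute_opDivE_opDivO j i).eq.symm
  · exact (opDivO_mul_opDivO i j).trans (LinearMap.ext fun x ↦ by simp [pI, opDiv])

lemma opPar_emb_mul_opDiv (a b : Ind m n) : opPar (emb b) * opDiv a =
    ((-1 : ℂ) ^ (pI a * pI b)) • (opDiv a * opPar (emb b)) + if a = b then 1 else 0 := by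
  rcases a with i | i <;> rcases b with j | j
  · simpa [pI, opDiv, opPar, emb] using opParE_mul_opDivE i j
  · simpa [pI, opDiv, opPar, emb] using (commute_opParO_opDivE i j).eq
  · simpa [pI, opDiv, opPar, emb] using (commute_opParE_opDivO j i).eq
  · exact (opParO_mul_opDivO i j).trans
      (LinearMap.ext fun x ↦ by simp [pI, opDiv, opPar, emb])

lemma tdiv_mul_tdiv (a b : Ind m n) :
    tdiv a * tdiv b = ((-1 : ℂ) ^ (pI a * pI b)) • (tdiv b * tdiv a) :=
  Subtype.ext (opDiv_mul_opDiv a b)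

lemma tpar_emb_mul_tdiv (a b : Ind m n) : tpar (emb b) * tdiv a =
    ((-1 : ℂ) ^ (pI a * pI b)) • (tdiv a * tpar (emb b)) + if a = b then 1 else 0 :=
  Subtype.ext ((opPar_emb_mul_opDiv a b).trans (by split_ifs <;> rfl))

/-- The total degree of the monomial `t_0^k t^e t̄^b`, the eigenvalue of the Euler operator. -/
def monoDegree (x : FMon m n) : ℤ := x.1 + ∑ i, (x.2.1 i : ℤ) + ∑ i, ((x.2.2 i).toNat : ℤ)

lemma sum_comp_update {ι α M : Type*} [Fintype ι] [DecidableEq ι] [AddCommGroup M] (f : α → M)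
    (e : ι → α) (i : ι) (v : α) :
    ∑ j, f (Function.update e i v j) = ∑ j, f (e j) + (f v - f (e i)) := by
  rw [← Finset.add_sum_erase _ _ (Finset.mem_univ i),
    ← Finset.add_sum_erase _ (fun j ↦ f (e j)) (Finset.mem_univ i), Function.update_self,
    Finset.sum_congr rfl fun j hj ↦ by rw [Function.update_of_ne (Finset.ne_of_mem_erase hj)]]
  abel

lemma tdivB_emb (a : Ind m n) : tdivB (emb a) = tdiv a := by rcases a with a | a <;> rfl

lemma tdel_z0 (b : Ind (m + 1) n) : tdel z0 b = tpar b := one_mul _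

lemma tdel_emb (a : Ind m n) (b : Ind (m + 1) n) : tdel (emb a) b = tdiv a * tpar b := by
  rw [tdel, tdivB_emb]

lemma En_eq_tpar_z0_add_sum : En m n = tpar z0 + ∑ a : Ind m n, tdiv a * tpar (emb a) := by
  rw [En, ← indSuccEquiv.sum_comp, Fintype.sum_sum_type, Fintype.sum_unique]
  change tdel z0 z0 + ∑ a : Ind m n, tdel (emb a) (emb a) = _
  simp only [tdel_z0, tdel_emb]

lemma opDivE_opParE_fmono (i : Fin m) (x : FMon m n) :
    opDivE i (opParE i (fmono x)) = (x.2.1 i : ℂ) • fmono x := by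
  cases hi : x.2.1 i with
  | zero => simp [opParE_fmono, hi]
  | succ r =>
    have hupd : Function.update x.2.1 i (r + 1) = x.2.1 := by rw [← hi, Function.update_eq_self]
    simp [opDivE_fmono, opParE_fmono, hi, hupd]

lemma En_fmono (x : FMon m n) :
    (En m n : Module.End ℂ (FSp m n)) (fmono x) = (monoDegree x : ℂ) • fmono x := by
  have hEn : (En m n : Module.End ℂ (FSp m n)) =
      opPar0 + (∑ i, opDivE i * opParE i + ∑ i, opDivO i * opParO i) := by
    refine (congrArg (Dprime m n).val En_eq_tpar_z0_add_sum).trans ?_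
    simp only [map_add, map_sum, map_mul, Fintype.sum_sum_type]
    rfl
  have hodd (i : Fin n) : (if x.2.2 i then fmono x else 0) = ((x.2.2 i).toNat : ℂ) • fmono x := by
    cases x.2.2 i <;> simp
  simp [hEn, opPar0_fmono, opDivE_opParE_fmono, opDivO_opParO_fmono, hodd, monoDegree, add_smul,
    Finset.sum_smul, add_assoc]

lemma commute_En_of_monoDegree {f : Module.End ℂ (FSp m n)}
    (hf : ∀ x, ∃ (c : ℂ) (y : FMon m n), monoDegree y = monoDegree x ∧ f (fmono x) = c • fmono y) :
    Commute (En m n : Module.End ℂ (FSp m n)) f := by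
  refine end_ext_fmono fun x ↦ ?_
  obtain ⟨c, y, hy, hfx⟩ := hf x
  rw [Module.End.mul_apply, Module.End.mul_apply, hfx, En_fmono, map_smul, map_smul, hfx, En_fmono,
    hy, smul_comm]

lemma commute_En_opDiv (a : Ind m n) : Commute (En m n : Module.End ℂ (FSp m n)) (opDiv a) := by
  refine commute_En_of_monoDegree fun x ↦ ?_
  rcases a with i | i
  · refine ⟨1, _, ?_, (opDivE_fmono i x).trans (one_smul _ _).symm⟩
    simp [monoDegree, sum_comp_update (fun k : ℕ ↦ (k : ℤ))]
  cases hx : x.2.2 i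
  · refine ⟨_, _, ?_, (opDivO_fmono i x).trans (if_neg (by simp [hx]))⟩
    push_cast [monoDegree, sum_comp_update (fun b : Bool ↦ (b.toNat : ℤ)), hx, Bool.toNat_true,
      Bool.toNat_false]
    ring
  · exact ⟨0, x, rfl, by simp [opDiv, opDivO_fmono, hx]⟩

lemma commute_En_opPar (a : Ind (m + 1) n) :
    Commute (En m n : Module.End ℂ (FSp m n)) (opPar a) := by
  refine commute_En_of_monoDegree fun x ↦ ?_
  rcases a with i | i
  · cases i using Fin.cases with
    | zero => exact ⟨_, x, rfl, opPar0_fmono x⟩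
    | succ i =>
      cases hi : x.2.1 i with
      | zero => exact ⟨0, x, rfl, by simp [opPar, opParE_fmono, hi]⟩
      | succ k =>
        refine ⟨_, _, ?_, opParE_fmono i x⟩
        push_cast [monoDegree, sum_comp_update (fun k : ℕ ↦ (k : ℤ)), hi]
        ring
  cases hx : x.2.2 i
  · exact ⟨0, x, rfl, by simp [opPar, opParO_fmono, hx]⟩
  · refine ⟨_, _, ?_, (opParO_fmono i x).trans (if_pos hx)⟩
    push_cast [monoDegree, sum_comp_update (fun b : Bool ↦ (b.toNat : ℤ)), hx, Bool.toNat_true,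
      Bool.toNat_false]
    ring

lemma commute_En (x : Dprime m n) : Commute (En m n) x := by
  have hx : (x : Module.End ℂ (FSp m n)) ∈ Subalgebra.centralizer ℂ {(En m n).1} := by
    refine Algebra.adjoin_le ?_ x.2
    rintro _ (⟨a, rfl⟩ | ⟨a, rfl⟩) _ rfl
    · exact commute_En_opDiv a
    · exact commute_En_opPar a
  exact Subtype.ext (hx _ rfl)

end Operators

/-! ### The homomorphism `φ_R` -/

section SuperTensorProduct

variable {m n : ℕ}

lemma pI_emb (a : Ind m n) : pI (emb a) = pI a := by rcases a with a | a <;> rfl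

variable {A : Type} [Ring A] [Algebra ℂ A]

lemma neg_one_pow_mul_eq_smul (e : ℕ) (x : A) :
    (-1) ^ e * x = ((-1 : ℂ) ^ e) • x := by
  rw [Algebra.smul_def, map_pow, map_neg, map_one]

lemma sum_neg_one_pow_pI : ∑ a : Ind m n, (-1 : ℂ) ^ pI a = m - n := by
  simp [pI, sub_eq_add_neg]

lemma gen_supercommutator {ι : Type} (p : ι → ℕ) [DecidableEq ι] (i j k l : ι) :
    gen p i j * gen p k l - ((-1 : ℂ) ^ ((p i + p j) * (p k + p l))) • (gen p k l * gen p i j) =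
      (if j = k then gen p i l else 0) -
        ((-1 : ℂ) ^ ((p i + p j) * (p k + p l))) • if l = i then gen p k j else 0 := by
  simpa only [map_sub, map_mul, map_smul, apply_ite (RingQuot.mkAlgHom ℂ (glRel ι p)), map_zero,
    ← gen.eq_def] using RingQuot.mkAlgHom_rel ℂ (glRel.basic (p := p) i j k l)

/-- The matrix `𝔈 = ((−1)^{|i|} e_{ij})`, mapped to an algebra `A` by a homomorphism of
`U(gl(m|n))`. -/
def glMatrix (f : UEA (Ind m n) pI →ₐ[ℂ] A) : Matrix (Ind m n) (Ind m n) A :=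
  Matrix.of fun i j ↦ ((-1 : ℂ) ^ pI i) • f (gen pI i j)

lemma glMatrix_mul_glMatrix (f : UEA (Ind m n) pI →ₐ[ℂ] A) (i j k l : Ind m n) :
    (-1) ^ ((pI i + pI j) * pI k) * (glMatrix f i j * glMatrix f k l) -
        (-1) ^ ((pI i + pI j) * pI l) * (glMatrix f k l * glMatrix f i j) =
      (-1) ^ (pI i * pI j) *
        ((if j = k then glMatrix f i l else 0) - if l = i then glMatrix f k j else 0) := by
  have hrel := congrArg (((-1 : ℂ) ^ ((pI i + pI j) * pI k + pI i + pI k)) • f ·)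
    (gen_supercommutator pI i j k l)
  simp only [map_sub, map_smul, map_mul, smul_sub, smul_smul, ← pow_add, apply_ite f,
    map_zero, smul_ite, smul_zero] at hrel
  simp only [glMatrix, Matrix.of_apply, smul_mul_smul_comm, neg_one_pow_mul_eq_smul, smul_sub,
    smul_smul, smul_ite, smul_zero, ← pow_add]
  convert hrel using 2
  · rw [add_assoc]
  · congr 1
    exact neg_one_pow_congr (by simp only [Nat.even_add, Nat.even_mul]; tauto)
  · split_ifs with hjk
    · subst hjk
      congr 1
      exact neg_one_pow_congr (by simp only [Nat.even_add, Nat.even_mul]; tauto)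
    · rfl
  · split_ifs with hli
    · subst hli
      congr 1
      exact neg_one_pow_congr (by simp only [Nat.even_add, Nat.even_mul]; tauto)
    · rfl

variable (ST : SuperTensor m n)

lemma commute_inU_gen_inD_En (i j : Ind m n) :
    Commute (ST.inU (gen pI i j)) (ST.inD (En m n)) := by
  rw [En_eq_tpar_z0_add_sum, map_add, map_sum]
  refine .add_right ?_ (.sum_right _ _ _ fun a _ ↦ ?_)
  · rw [Commute, SemiconjBy, ST.comm_par]
    simp [pI, z0]
  · rw [Commute, SemiconjBy, map_mul, ← mul_assoc, ST.comm_div, smul_mul_assoc, mul_assoc,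
      ST.comm_par, mul_smul_comm, smul_smul, pI_emb, ← mul_pow, neg_one_mul, neg_neg, one_pow,
      one_smul, mul_assoc]

lemma commute_inU_inD_En (u : UEA (Ind m n) pI) : Commute (ST.inU u) (ST.inD (En m n)) := by
  obtain ⟨f, rfl⟩ := RingQuot.mkAlgHom_surjective ℂ (glRel (Ind m n) pI) u
  induction f using FreeAlgebra.induction with
  | grade0 r =>
    rw [AlgHom.commutes, AlgHom.commutes]
    exact Algebra.commutes _ _
  | grade1 x => exact commute_inU_gen_inD_En ST x.1 x.2
  | mul a b ha hb => simpa only [map_mul] using ha.mul_left hb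
  | add a b ha hb => simpa only [map_add] using ha.add_left hb

lemma commute_inD_En (x : ST.T) : Commute (ST.inD (En m n)) x := by
  obtain ⟨z, rfl⟩ := ST.equiv.surjective x
  induction z with
  | zero => simp
  | add a b ha hb => simpa only [map_add] using ha.add_right hb
  | tmul d u =>
    rw [ST.equiv_tmul]
    exact ((commute_En d).map ST.inD).mul_right (commute_inU_inD_En ST u).symm

/-- The column of signed coordinates `(−1)^{|a|} t_a/t_0`, the signs being those of `𝔈`. -/
def signedCoord (a : Ind m n) : ST.T := ((-1 : ℂ) ^ pI a) • ST.inD (tdiv a)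

/-- The row of derivations `t_0 ∂_b`, `b ∈ I`. -/
def derivRow (b : Ind m n) : ST.T := ST.inD (tpar (emb b))

/-- The Euler operator shifted by the superdimension `m - n`, the value of `κ` for which
`φ_R(𝔈)` is `phiMatrix` up to the scalar `R`. -/
def shiftedEuler : ST.T := ST.inD (En m n) + m - n

lemma commute_shiftedEuler (x : ST.T) : Commute (shiftedEuler ST) x :=
  ((commute_inD_En ST x).add_left (Nat.cast_commute m x)).sub_left (Nat.cast_commute n x)

lemma isGlWeylSystem (ST : SuperTensor m n) :
    IsGlWeylSystem (glMatrix ST.inU) (signedCoord ST) (derivRow ST) where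
  F_mul_F := glMatrix_mul_glMatrix ST.inU
  F_mul_y i j a := by
    simp only [glMatrix, signedCoord, Matrix.of_apply, smul_mul_smul_comm, neg_one_pow_mul_eq_smul,
      ST.comm_div, smul_smul, ← pow_add]
    congr 1
    exact neg_one_pow_congr (by simp only [Nat.even_add, Nat.even_mul]; tauto)
  F_mul_d i j a := by
    simp only [glMatrix, derivRow, Matrix.of_apply, smul_mul_assoc, mul_smul_comm,
      neg_one_pow_mul_eq_smul, ST.comm_par, smul_smul, pI_emb, ← pow_add]
    congr 1
    exact neg_one_pow_congr (by simp only [Nat.even_add, Nat.even_mul]; tauto)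
  y_mul_y a b := by
    simp only [signedCoord, smul_mul_smul_comm, neg_one_pow_mul_eq_smul, ← map_mul,
      tdiv_mul_tdiv a b, map_smul, smul_smul]
    ring_nf
  d_mul_y a b := by
    simp only [signedCoord, derivRow, smul_mul_assoc, mul_smul_comm, neg_one_pow_mul_eq_smul,
      ← map_mul, tpar_emb_mul_tdiv a b, map_smul, smul_smul, map_add, smul_add]
    congr 1
    split_ifs <;> simp [Algebra.smul_def]

lemma isGlMatrix_toBlocks₁₁_glMatrix (f : UEA (Ind m n) pI →ₐ[ℂ] A) :
    IsGlMatrix (glMatrix f).toBlocks₁₁ := fun a i b j ↦ by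
  simpa [pI, Matrix.toBlocks₁₁] using
    glMatrix_mul_glMatrix f (Sum.inl a) (Sum.inl i) (Sum.inl b) (Sum.inl j)

lemma derivRow_dotProduct_signedCoord :
    derivRow ST ⬝ᵥ signedCoord ST = shiftedEuler ST - ST.inD (tpar z0) := by
  have hterm (a : Ind m n) : derivRow ST a * signedCoord ST a =
      ST.inD (tdiv a * tpar (emb a)) + algebraMap ℂ ST.T ((-1) ^ pI a) := by
    rw [derivRow, signedCoord, mul_smul_comm, ← map_mul, tpar_emb_mul_tdiv, if_pos rfl, map_add,
      map_one, smul_add, map_smul, smul_smul, ← pow_add, Even.neg_one_pow (by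
        simp only [Nat.even_add, Nat.even_mul]; tauto), one_smul, Algebra.algebraMap_eq_smul_one]
  rw [dotProduct, Finset.sum_congr rfl fun a _ ↦ hterm a, Finset.sum_add_distrib, ← map_sum,
    ← map_sum, sum_neg_one_pow_pI, shiftedEuler, En_eq_tpar_z0_add_sum, map_add, map_sub,
    map_natCast, map_natCast]
  abel

variable {ST} {R : ST.T} {φ : UEA (Ind (m + 1) n) pI →ₐ[ℂ] ST.T}

lemma IsPhi.glMatrix_eq (hφ : IsPhi ST R φ) : glMatrix φ =
    phiMatrix (glMatrix ST.inU) (signedCoord ST) (derivRow ST) (shiftedEuler ST) +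
      Matrix.scalar _ R := by
  have hκ : shiftedEuler ST - derivRow ST ⬝ᵥ signedCoord ST = ST.inD (tpar z0) := by
    rw [derivRow_dotProduct_signedCoord, sub_sub_cancel]
  obtain ⟨hEmb, hEmb0, h0Emb, h00⟩ := hφ
  refine matrix_ext_z0_emb ?_ (fun b ↦ ?_) (fun a ↦ ?_) (fun a b ↦ ?_)
  · rw [Matrix.add_apply, phiMatrix_z0_z0, hκ, glMatrix, Matrix.of_apply, h00, tdel_z0]
    simp [pI, z0]
  · rw [Matrix.add_apply, phiMatrix_z0_emb, glMatrix, Matrix.of_apply, h0Emb, tdel_z0,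
      Matrix.scalar_apply, Matrix.diagonal_apply_ne _ (emb_ne_z0 b).symm, derivRow]
    simp [pI, z0]
  · rw [Matrix.add_apply, phiMatrix_emb_z0, hκ, glMatrix, Matrix.of_apply, hEmb0, tdel_emb,
      Matrix.scalar_apply, Matrix.diagonal_apply_ne _ (emb_ne_z0 a), add_zero, pI_emb, map_mul,
      smul_sub, Finset.smul_sum, signedCoord, smul_mul_assoc, Matrix.mulVec, dotProduct]
    congr 1
    refine Finset.sum_congr rfl fun j _ ↦ ?_
    simp only [glMatrix, Matrix.of_apply, signedCoord, smul_mul_smul_comm, ST.comm_div, smul_smul,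
      ← pow_add]
    congr 1
    exact neg_one_pow_congr (by simp only [Nat.even_add, Nat.even_mul]; tauto)
  · rw [Matrix.add_apply, phiMatrix_emb_emb, glMatrix, Matrix.of_apply, hEmb, tdel_emb, pI_emb,
      map_mul, smul_add, smul_add, signedCoord, smul_mul_assoc, derivRow, glMatrix,
      Matrix.of_apply, Matrix.scalar_apply, Matrix.diagonal_apply]
    congr 1
    by_cases hab : a = b
    · subst hab
      rw [if_pos rfl, if_pos rfl, smul_smul, ← pow_add, Even.neg_one_pow (by
        simp only [Nat.even_add, Nat.even_mul]; tauto), one_smul]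
    · rw [if_neg hab, if_neg (emb_injective.ne hab), smul_zero]

lemma IsPhi.map_C_glMatrix_eq (hφ : IsPhi ST R φ) :
    (glMatrix φ).map HahnSeries.C = (phiMatrix (glMatrix ST.inU) (signedCoord ST)
      (derivRow ST) (shiftedEuler ST)).map HahnSeries.C +
        Matrix.scalar _ (HahnSeries.C R : TSer ST.T) := by
  rw [hφ.glMatrix_eq]
  ext1 i j
  by_cases h : i = j <;> simp [h]

lemma IsPhi.capelli_glMatrix (hφ : IsPhi ST R φ) (hR : ∀ a, Commute R a) {v : TSer ST.T}
    (hv : ∀ x, Commute v x)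
    (hunit : ∀ t < n, IsUnit ((phiMatrix (glMatrix ST.inU) (signedCoord ST) (derivRow ST)
      (shiftedEuler ST)).map HahnSeries.C - Matrix.scalar _ (v + m - (t : ℕ)))) :
    capelli ((glMatrix φ).map HahnSeries.C) (v + HahnSeries.C R) =
      ((HahnSeries.C (ST.inD (En m n)) : TSer ST.T) - v) *
        capelli ((glMatrix ST.inU).map HahnSeries.C) (v + 1) := by
  have hN : IsGlMatrix (phiMatrix (glMatrix ST.inU) (signedCoord ST) (derivRow ST)
      (shiftedEuler ST)).toBlocks₁₁ := by
    convert (isGlMatrix_toBlocks₁₁_glMatrix φ).sub_scalar hR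
    ext i j
    simp [hφ.glMatrix_eq, Matrix.toBlocks₁₁, Matrix.diagonal_apply]
  have hκ : (HahnSeries.C (shiftedEuler ST) : TSer ST.T) - (v + (m : TSer ST.T) - n) =
      (HahnSeries.C (ST.inD (En m n)) : TSer ST.T) - v := by
    rw [shiftedEuler, map_sub, map_add, map_natCast, map_natCast]
    abel
  rw [hφ.map_C_glMatrix_eq, capelli_add_scalar, ← hκ]
  exact (isGlWeylSystem ST).capelli_phiMatrix (commute_shiftedEuler ST) hv hN hunit

lemma IsPhi.capelli_glMatrix_Tv (hφ : IsPhi ST R φ) (hR : ∀ a, Commute R a) :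
    capelli ((glMatrix φ).map HahnSeries.C) (Tv + HahnSeries.C R) =
      ((HahnSeries.C (ST.inD (En m n)) : TSer ST.T) - Tv) *
        capelli ((glMatrix ST.inU).map HahnSeries.C) (Tv + 1) := by
  refine hφ.capelli_glMatrix hR commute_Tv fun t _ ↦ ?_
  have hC : (HahnSeries.C ((m : ST.T) - (t : ℕ)) : TSer ST.T) = m - (t : ℕ) := by
    rw [map_sub, map_natCast, map_natCast]
  rw [add_sub_assoc, ← hC]
  exact isUnit_map_C_sub_scalar _ _

lemma IsPhi.capelli_glMatrix_En (hφ : IsPhi ST R φ) (hR : ∀ a, Commute R a) :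
    capelli ((glMatrix φ).map HahnSeries.C)
      ((HahnSeries.C (ST.inD (En m n)) : TSer ST.T) + HahnSeries.C R) = 0 := by
  by_cases hunit : ∀ t < n, IsUnit ((phiMatrix (glMatrix ST.inU) (signedCoord ST) (derivRow ST)
      (shiftedEuler ST)).map HahnSeries.C -
        Matrix.scalar _ ((HahnSeries.C (ST.inD (En m n)) : TSer ST.T) + m - (t : ℕ)))
  · rw [hφ.capelli_glMatrix hR (commute_hahnSeries_C (commute_inD_En ST)) hunit, sub_self, zero_mul]
  · push Not at hunit
    obtain ⟨t, ht, hsing⟩ := hunit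
    -- a resolvent is singular, so its value is `0` and the Berezinian vanishes for that reason
    rw [hφ.map_C_glMatrix_eq, capelli_add_scalar]
    exact capelli_eq_zero_of_not_isUnit ht hsing

end SuperTensorProduct

/-- Theorem 5.5.  With `C_φ` the Capelli Berezinian of `gl(m+1|n)` pushed
through `φ_R` (equivalently: the Capelli expression formed from the matrix `φ(𝔈)`, regarded
as a function of a Laurent-series argument), one has `C_φ(T+R) = (E − T)·C_{m|n}(T+1)`, and
consequently `C_φ(E+R) = 0`. -/
theorem stmt14 (m n : ℕ) (ST : SuperTensor m n) (R : ST.T)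
    (hR : R ∈ Subalgebra.center ℂ ST.T)
    (φ : UEA (Ind (m+1) n) pI →ₐ[ℂ] ST.T) (hφ : IsPhi ST R φ) :
    (capelli (m := m+1) (n := n) (scrE (m+1) n fun i j => φ (gen pI i j))
        (Tv + HahnSeries.C R) =
      (HahnSeries.C (ST.inD (En m n)) - Tv) *
        capelli (scrE m n fun i j => ST.inU (gen pI i j)) (Tv + 1)) ∧
    capelli (m := m+1) (n := n) (scrE (m+1) n fun i j => φ (gen pI i j))
        (HahnSeries.C (ST.inD (En m n) + R)) = 0 := by
  have hR' (a : ST.T) : Commute R a := (Subalgebra.mem_center_iff.mp hR a).symm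
  refine ⟨hφ.capelli_glMatrix_Tv hR', ?_⟩
  rw [map_add]
  exact hφ.capelli_glMatrix_En hR'
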